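/- (Sliver Fourier estimate.) Let $f_1,\dots,f_n$ be real-valued functions that are real analytic and not identically zero near the origin of $\mathbb R^2$, let $\gamma_1,\dots,\gamma_n\in\mathbb R$, and let $E\subseteq\mathbb R^2$ be a set whose boundary near the origin lies in the zero set of a real analytic function that is not identically zero near the origin; assume that $\chi_E\prod_{i}|f_i|^{\gamma_i}$ is integrable on a neighborhood of the origin. Let $a>0$ and let $D=\{(x,y): 0<x<a,\ g_0(x)<y<G_0(x)\}$, where, for some positive integer $N$, $g_0(x^N)$ and $G_0(x^N)$ are real analytic on a neighborhood of $[0,a^{1/N}]$, $G_0(x)=Hx^M+$ higher order terms as $x\to0^+$ ($H>0$, $M\ge1$), and $g_0$ is either identically zero on $(0,a)$ or $g_0(x)=hx^m+$ higher order terms ($h>0$, $m>M$). Let $k(x)=cx+l(x)$ with $k(x^N)$ real analytic on a neighborhood of $[0,a^{1/N}]$ and with $l$ vanishing to order greater than $1$ at $0$, let $\eta(x,y)=(x,y+k(x))$, and let $S=\eta(D)$ be contained in $\{(x,y):|y|<b|x|\}$ for some $b>0$. Suppose that there is $\eta'<1$ such that for each $i$ there are $d_i\ne0$, a real $\alpha_i\ge0$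 and an integer $\beta_i\ge0$ with, on $D$, $$|f_i\circ\eta-d_ix^{\alpha_i}y^{\beta_i}|\le\eta'|d_i|x^{\alpha_i}y^{\beta_i},$$ $$|\partial_x(f_i\circ\eta)-d_i\alpha_ix^{\alpha_i-1}y^{\beta_i}|\le\eta'|d_i|x^{\alpha_i-1}y^{\beta_i},\qquad |\partial_y(f_i\circ\eta)-d_i\beta_ix^{\alpha_i}y^{\beta_i-1}|\le\eta'|d_i|x^{\alpha_i}y^{\beta_i-1},$$ and that $\chi_E\circ\eta$ is constant on $D$. Let $v$ be the unit vector in the direction $(1,c)$ and $v^\perp$ a unit vector orthogonal to it. Then there is $r_1>0$ such that for every $A$ there is a constant $C>0$ (so $r_1$ depends only on the $f_i$, $\gamma_i$, $E$ and the sliver data, and $C$ on these and $A$) with the following property. Let $\alpha:\mathbb R^2\to\mathbb R$ be $C^1$ away from the origin and supported in $\{x^2+y^2<r_1^2\}$, with $|\alpha|\le A$ everywhere and $|\nabla\alpha(x,y)|\le A(x^2+y^2)^{-1/2}$ for $(x,y)\neq(0,0)$. Then for all $(t,u)\in\mathbb R^2$ the integrand on the left below is integrable over $S$, and $$\Big|\int_S\alpha(x,y)\chi_E(x,y)\prod_{i=1}^n|f_i(x,y)|^{\gamma_i}e^{i(tx+uy)}\,dx\,dy\Big|\le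 C\int_S\big(1+|(t,u)\cdot v|\,|(x,y)|+|u|\,|(x,y)\cdot v^\perp|\big)^{-1/2}\chi_E(x,y)\prod_{i=1}^n|f_i(x,y)|^{\gamma_i}\,dx\,dy,$$ where the integral on the right, of a nonnegative function, is understood in $[0,\infty]$ (it is finite if $S$ lies in a neighborhood of the origin on which $\chi_E\prod_i|f_i|^{\gamma_i}$ is integrable). -/

import Mathlib

open MeasureTheory Set Filter
open scoped Topology ENNReal

noncomputable section

/-- The Euclidean magnitude `|(x,y)| = √(x²+y²)` of a point of `ℝ²`
(the norm of the type `ℝ × ℝ` is the sup norm). -/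
def nrm2 (p : ℝ × ℝ) : ℝ := Real.sqrt (p.1 ^ 2 + p.2 ^ 2)

/-- The open Euclidean disk `{(x,y) : x²+y² < r²}` centered at the origin. -/
def disk2 (r : ℝ) : Set (ℝ × ℝ) := {p : ℝ × ℝ | p.1 ^ 2 + p.2 ^ 2 < r ^ 2}

/-- Dot product on `ℝ²`. -/
def dot2 (p q : ℝ × ℝ) : ℝ := p.1 * q.1 + p.2 * q.2

/-- The perpendicular vector `v^⊥ = (v₂, −v₁)`. -/
def perp2 (v : ℝ × ℝ) : ℝ × ℝ := (v.2, -v.1)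

/-- The unit vector in the direction `(1, c)`. -/
def unitDir (c : ℝ) : ℝ × ℝ := (Real.sqrt (1 + c ^ 2))⁻¹ • ((1 : ℝ), c)

/-- The function `χ_E · ∏ᵢ |fᵢ|^(γᵢ)`. -/
def stdFun (n : ℕ) (f : Fin n → ℝ × ℝ → ℝ) (γ : Fin n → ℝ) (E : Set (ℝ × ℝ)) :
    ℝ × ℝ → ℝ :=
  E.indicator fun p => ∏ i, |f i p| ^ (γ i)

/-- Conditions on the factor `α`: it is `C¹` away from the origin, bounded by `A`, and the
Euclidean norm of its gradient is at most `A (x²+y²)^{-1/2}` away from the origin. -/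
def AlphaBound (α : ℝ × ℝ → ℝ) (A : ℝ) : Prop :=
  ContDiffOn ℝ 1 α {(0 : ℝ × ℝ)}ᶜ ∧ (∀ p, |α p| ≤ A) ∧
  ∀ p : ℝ × ℝ, p ≠ 0 →
    nrm2 (fderiv ℝ α p (1, 0), fderiv ℝ α p (0, 1)) ≤ A * (nrm2 p)⁻¹

/-- The integrand `h(x,y) e^{i(tx+uy)}`. -/
def oscIntegrand (h : ℝ × ℝ → ℝ) (t u : ℝ) (p : ℝ × ℝ) : ℂ :=
  (h p : ℂ) * Complex.exp (Complex.I * ((t : ℂ) * (p.1 : ℂ) + (u : ℂ) * (p.2 : ℂ)))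

/-- `x ↦ k(x^N)` is real analytic: on `[0,a]`, `k(x) = k'(x^{1/N})` for a function `k'` that is
real analytic on an open set containing `[0, a^{1/N}]`. -/
def PuiseuxOn (N : ℕ) (a : ℝ) (k : ℝ → ℝ) : Prop :=
  ∃ (k' : ℝ → ℝ) (I : Set ℝ), IsOpen I ∧ Icc (0 : ℝ) (a ^ ((N : ℝ)⁻¹)) ⊆ I ∧
    AnalyticOnNhd ℝ k' I ∧ ∀ x ∈ Icc (0 : ℝ) a, k x = k' (x ^ ((N : ℝ)⁻¹))

/-- `k(x) = l·x^s + higher order terms` as `x → 0⁺`. -/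
def LeadingTerm (k : ℝ → ℝ) (l s : ℝ) : Prop :=
  Tendsto (fun x => k x / x ^ s) (𝓝[>] (0 : ℝ)) (𝓝 l)

/-- The sliver `{(x,y) : 0 < x < a, g(x) < y < G(x)}`. -/
def sliverSet (a : ℝ) (g G : ℝ → ℝ) : Set (ℝ × ℝ) :=
  {q : ℝ × ℝ | 0 < q.1 ∧ q.1 < a ∧ g q.1 < q.2 ∧ q.2 < G q.1}

/-- The coordinate change `η(x,y) = (x, y + k(x))`. -/
def shear (k : ℝ → ℝ) (q : ℝ × ℝ) : ℝ × ℝ := (q.1, q.2 + k q.1)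

/-- On `D`, the function `F` is comparable to the monomial `d x^α y^β` with relative error
`ε`, including its first `x`- and `y`-derivatives. -/
def MonomialLike (F : ℝ × ℝ → ℝ) (D : Set (ℝ × ℝ)) (ε d α : ℝ) (β : ℕ) : Prop :=
  ∀ q ∈ D,
    |F q - d * q.1 ^ α * q.2 ^ (β : ℝ)| ≤ ε * |d| * q.1 ^ α * q.2 ^ (β : ℝ) ∧
    |deriv (fun x => F (x, q.2)) q.1 - d * α * q.1 ^ (α - 1) * q.2 ^ (β : ℝ)| ≤
      ε * |d| * q.1 ^ (α - 1) * q.2 ^ (β : ℝ) ∧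
    |deriv (fun y => F (q.1, y)) q.2 - d * (β : ℝ) * q.1 ^ α * q.2 ^ ((β : ℝ) - 1)| ≤
      ε * |d| * q.1 ^ α * q.2 ^ ((β : ℝ) - 1)

/-- The weight `(1 + |(t,u)·v| |(x,y)| + |u| |(x,y)·v^⊥|)^{-1/2}`. -/
def decayWeight (v : ℝ × ℝ) (t u : ℝ) (p : ℝ × ℝ) : ℝ :=
  (1 + |dot2 (t, u) v| * nrm2 p + |u| * |dot2 p (perp2 v)|) ^ (-(1 / 2 : ℝ))

end

/-- First derivative test for oscillatory integrals. -/
theorem norm_integral_exp_le_of_le_abs_deriv {a b μ : ℝ} (hab : a ≤ b) {J J₁ J₂ : ℝ → ℝ}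
    (hJ : ∀ x ∈ Icc a b, HasDerivAt J (J₁ x) x) (hJ₁ : ∀ x ∈ Icc a b, HasDerivAt J₁ (J₂ x) x)
    (hJ₂ : ContinuousOn J₂ (Icc a b)) (hμ : 0 < μ) (hle : ∀ x ∈ Icc a b, μ ≤ |J₁ x|)
    (hs : (∀ x ∈ Icc a b, 0 ≤ J₂ x) ∨ (∀ x ∈ Icc a b, J₂ x ≤ 0)) :
    ‖∫ x in a..b, Complex.exp (J x * Complex.I)‖ ≤ 4 / μ := by
  have hne : ∀ x ∈ Icc a b, J₁ x ≠ 0 := fun x hx h => by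
    have := hle x hx
    rw [h, abs_zero] at this
    linarith
  have hinv : ∀ x ∈ Icc a b, |(J₁ x)⁻¹| ≤ μ⁻¹ := fun x hx => by
    rw [abs_inv]
    exact inv_anti₀ hμ (hle x hx)
  have hc1 : ContinuousOn J₁ (Icc a b) := fun x hx => (hJ₁ x hx).continuousAt.continuousWithinAt
  have hc0 : ContinuousOn J (Icc a b) := fun x hx => (hJ x hx).continuousAt.continuousWithinAt
  have hd : ∀ x ∈ Icc a b, HasDerivAt (fun y => (J₁ y)⁻¹) (-J₂ x / J₁ x ^ 2) x := fun x hx =>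
    (hJ₁ x hx).inv (hne x hx)
  have hdc : ContinuousOn (fun x => -J₂ x / J₁ x ^ 2) (Icc a b) :=
    hJ₂.neg.div (hc1.pow 2) fun x hx => pow_ne_zero 2 (hne x hx)
  have hu : uIcc a b = Icc a b := uIcc_of_le hab
  have hint : IntervalIntegrable (fun x => -J₂ x / J₁ x ^ 2) volume a b :=
    (hdc.mono hu.le).intervalIntegrable
  have hftc : ∫ x in a..b, -J₂ x / J₁ x ^ 2 = (J₁ b)⁻¹ - (J₁ a)⁻¹ :=
    intervalIntegral.integral_eq_sub_of_hasDerivAt (fun x hx => hd x (hu ▸ hx)) hint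
  have habs : ∫ x in a..b, |-J₂ x / J₁ x ^ 2| ≤ 2 * μ⁻¹ := by
    have h1 : |∫ x in a..b, -J₂ x / J₁ x ^ 2| ≤ 2 * μ⁻¹ := by
      rw [hftc]
      have := abs_sub (J₁ b)⁻¹ (J₁ a)⁻¹
      have := hinv a ⟨le_rfl, hab⟩
      have := hinv b ⟨hab, le_rfl⟩
      linarith
    refine le_trans ?_ h1
    rcases hs with hs | hs
    · have : ∫ x in a..b, |-J₂ x / J₁ x ^ 2| = ∫ x in a..b, -(-J₂ x / J₁ x ^ 2) :=
        intervalIntegral.integral_congr fun x hx => abs_of_nonpos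
          (div_nonpos_of_nonpos_of_nonneg (by linarith [hs x (hu ▸ hx)]) (sq_nonneg _))
      rw [this, intervalIntegral.integral_neg]
      exact neg_le_abs _
    · have : ∫ x in a..b, |-J₂ x / J₁ x ^ 2| = ∫ x in a..b, (-J₂ x / J₁ x ^ 2) :=
        intervalIntegral.integral_congr fun x hx => abs_of_nonneg
          (div_nonneg (by linarith [hs x (hu ▸ hx)]) (sq_nonneg _))
      rw [this]
      exact le_abs_self _
  have hexp : ∀ x ∈ uIcc a b, HasDerivAt (fun y : ℝ => Complex.exp (J y * Complex.I))
      (Complex.exp (J x * Complex.I) * ((J₁ x : ℂ) * Complex.I)) x := fun x hx =>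
    (((hJ x (hu ▸ hx)).ofReal_comp).mul_const Complex.I).cexp
  have hexpc : ContinuousOn (fun y : ℝ => Complex.exp (J y * Complex.I)) (Icc a b) :=
    ((Complex.continuous_ofReal.comp_continuousOn hc0).mul continuousOn_const).cexp
  have hparts := intervalIntegral.integral_mul_deriv_eq_deriv_mul (a := a) (b := b)
    (u := fun x => (((J₁ x)⁻¹ : ℝ) : ℂ) * (-Complex.I))
    (u' := fun x => ((-J₂ x / J₁ x ^ 2 : ℝ) : ℂ) * (-Complex.I))
    (fun x hx => ((hd x (hu ▸ hx)).ofReal_comp).mul_const _) hexp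
    (((Complex.continuous_ofReal.comp_continuousOn hdc).mul continuousOn_const).mono
      hu.le).intervalIntegrable
    ((hexpc.mul ((Complex.continuous_ofReal.comp_continuousOn hc1).mul continuousOn_const)).mono
      hu.le).intervalIntegrable
  have hleft : ∫ x in a..b, (((J₁ x)⁻¹ : ℝ) : ℂ) * (-Complex.I) *
      (Complex.exp (J x * Complex.I) * ((J₁ x : ℂ) * Complex.I)) =
      ∫ x in a..b, Complex.exp (J x * Complex.I) := by
    refine intervalIntegral.integral_congr fun x hx => ?_
    have h1 : (J₁ x : ℂ) ≠ 0 := by exact_mod_cast hne x (hu ▸ hx)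
    have h2 : ((J₁ x : ℂ))⁻¹ * (J₁ x : ℂ) = 1 := inv_mul_cancel₀ h1
    push_cast
    linear_combination (-(Complex.I ^ 2) * Complex.exp (J x * Complex.I)) * h2 -
      Complex.exp (J x * Complex.I) * Complex.I_sq
  rw [← hleft, hparts]
  have hb1 : ∀ x ∈ Icc a b, ‖(((J₁ x)⁻¹ : ℝ) : ℂ) * (-Complex.I) *
      Complex.exp (J x * Complex.I)‖ ≤ μ⁻¹ := fun x hx => by
    rw [norm_mul, norm_mul, norm_neg, Complex.norm_I, Complex.norm_exp_ofReal_mul_I,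
      Complex.norm_real, mul_one, mul_one]
    exact hinv x hx
  have hb2 : ‖∫ x in a..b, ((-J₂ x / J₁ x ^ 2 : ℝ) : ℂ) * (-Complex.I) *
      Complex.exp (J x * Complex.I)‖ ≤ ∫ x in a..b, |-J₂ x / J₁ x ^ 2| := by
    refine intervalIntegral.norm_integral_le_of_norm_le hab ?_ hint.abs
    refine Eventually.of_forall fun x _ => ?_
    rw [norm_mul, norm_mul, norm_neg, Complex.norm_I, Complex.norm_exp_ofReal_mul_I,
      Complex.norm_real, mul_one, mul_one, Real.norm_eq_abs]
  refine (norm_sub_le _ _).trans ((add_le_add (norm_sub_le _ _) le_rfl).trans ?_)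
  have := hb1 a ⟨le_rfl, hab⟩
  have := hb1 b ⟨hab, le_rfl⟩
  rw [div_eq_mul_inv]
  linarith

theorem norm_integral_exp_le_sub {a b : ℝ} (hab : a ≤ b) (J : ℝ → ℝ) :
    ‖∫ x in a..b, Complex.exp (J x * Complex.I)‖ ≤ b - a := by
  refine (intervalIntegral.norm_integral_le_of_norm_le_const (C := 1) fun x _ => ?_).trans ?_
  · rw [Complex.norm_exp_ofReal_mul_I]
  · rw [abs_of_nonneg (sub_nonneg.2 hab), one_mul]

theorem norm_integral_exp_neg {a b : ℝ} (J : ℝ → ℝ) :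
    ‖∫ x in a..b, Complex.exp ((-J x : ℝ) * Complex.I)‖ =
      ‖∫ x in a..b, Complex.exp (J x * Complex.I)‖ := by
  rw [← Complex.norm_conj (∫ x in a..b, Complex.exp (J x * Complex.I)),
    intervalIntegral.intervalIntegral_eq_integral_uIoc,
    intervalIntegral.intervalIntegral_eq_integral_uIoc, Complex.real_smul, Complex.real_smul,
    map_mul, ← integral_conj, Complex.conj_ofReal]
  congr 4
  ext x
  rw [← Complex.exp_conj]
  simp

/-- Van der Corput's second derivative test. -/
theorem norm_integral_exp_le_of_le_second_deriv {a b μ : ℝ} (hab : a ≤ b) {J J₁ J₂ : ℝ → ℝ}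
    (hJ : ∀ x ∈ Icc a b, HasDerivAt J (J₁ x) x) (hJ₁ : ∀ x ∈ Icc a b, HasDerivAt J₁ (J₂ x) x)
    (hJ₂ : ContinuousOn J₂ (Icc a b)) (hμ : 0 < μ) (hle : ∀ x ∈ Icc a b, μ ≤ J₂ x) :
    ‖∫ x in a..b, Complex.exp (J x * Complex.I)‖ ≤ 10 / √μ := by
  have hc1 : ContinuousOn J₁ (Icc a b) := fun x hx => (hJ₁ x hx).continuousAt.continuousWithinAt
  have hc0 : ContinuousOn J (Icc a b) := fun x hx => (hJ x hx).continuousAt.continuousWithinAt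
  have hgrow : ∀ x ∈ Icc a b, ∀ y ∈ Icc a b, x ≤ y → μ * (y - x) ≤ J₁ y - J₁ x := by
    refine (convex_Icc a b).mul_sub_le_image_sub_of_le_deriv hc1 ?_ ?_
    · intro x hx
      exact (hJ₁ x (interior_subset hx)).differentiableAt.differentiableWithinAt
    · intro x hx
      rw [(hJ₁ x (interior_subset hx)).deriv]
      exact hle x (interior_subset hx)
  obtain ⟨c, hc, hneg, hpos⟩ : ∃ c ∈ Icc a b, (∀ x ∈ Ico a c, J₁ x ≤ -(μ * (c - x))) ∧
      ∀ x ∈ Ioc c b, μ * (x - c) ≤ J₁ x := by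
    by_cases h1 : 0 ≤ J₁ a
    · refine ⟨a, ⟨le_rfl, hab⟩, fun x hx => absurd hx (by simp), fun x hx => ?_⟩
      have := hgrow a ⟨le_rfl, hab⟩ x ⟨hx.1.le, hx.2⟩ hx.1.le
      linarith
    by_cases h2 : J₁ b ≤ 0
    · refine ⟨b, ⟨hab, le_rfl⟩, fun x hx => ?_, fun x hx => absurd hx (by simp)⟩
      have := hgrow x ⟨hx.1, hx.2.le⟩ b ⟨hab, le_rfl⟩ hx.2.le
      linarith
    obtain ⟨c, hc, hc0⟩ := intermediate_value_Icc hab hc1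
      (⟨(not_le.1 h1).le, (not_le.1 h2).le⟩ : (0 : ℝ) ∈ Icc (J₁ a) (J₁ b))
    refine ⟨c, hc, fun x hx => ?_, fun x hx => ?_⟩
    · have := hgrow x ⟨hx.1, hx.2.le.trans hc.2⟩ c hc hx.2.le
      linarith
    · have := hgrow c hc x ⟨hc.1.trans hx.1.le, hx.2⟩ hx.1.le
      linarith
  set δ := (√μ)⁻¹ with hδ
  have hsμ : 0 < √μ := Real.sqrt_pos.2 hμ
  have hδ0 : 0 < δ := inv_pos.2 hsμ
  have hμδ : μ * δ = √μ := by
    rw [hδ, ← div_eq_mul_inv, div_eq_iff hsμ.ne', Real.mul_self_sqrt hμ.le]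
  have hii : ∀ x ∈ Icc a b, ∀ y ∈ Icc a b,
      IntervalIntegrable (fun x : ℝ => Complex.exp (J x * Complex.I)) volume x y :=
    fun x hx y hy => ((((Complex.continuous_ofReal.comp_continuousOn hc0).mul
      continuousOn_const).cexp).mono (uIcc_subset_Icc hx hy)).intervalIntegrable
  have htail : ∀ x ∈ Icc a b, ∀ y ∈ Icc a b, x ≤ y → (∀ z ∈ Icc x y, √μ ≤ |J₁ z|) →
      ‖∫ x in x..y, Complex.exp (J x * Complex.I)‖ ≤ 4 / √μ := by
    intro x hx y hy hxy h
    have hsub : Icc x y ⊆ Icc a b := Icc_subset_Icc hx.1 hy.2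
    exact norm_integral_exp_le_of_le_abs_deriv hxy (fun z hz => hJ z (hsub hz))
      (fun z hz => hJ₁ z (hsub hz)) (hJ₂.mono hsub) hsμ h
      (Or.inl fun z hz => hμ.le.trans (hle z (hsub hz)))
  have hp : max a (c - δ) ∈ Icc a b := ⟨le_max_left _ _, max_le hab (by linarith [hc.2])⟩
  have hq : min b (c + δ) ∈ Icc a b := ⟨le_min hab (by linarith [hc.1]), min_le_left _ _⟩
  have hpq : max a (c - δ) ≤ min b (c + δ) :=
    max_le hq.1 (le_min (by linarith [hc.2]) (by linarith))
  have h1 : ‖∫ x in a..max a (c - δ), Complex.exp (J x * Complex.I)‖ ≤ 4 / √μ := by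
    by_cases hcase : c - δ ≤ a
    · rw [max_eq_left hcase, intervalIntegral.integral_same, norm_zero]
      positivity
    · rw [max_eq_right (not_le.1 hcase).le] at hp ⊢
      refine htail a ⟨le_rfl, hab⟩ _ hp hp.1 fun z hz => ?_
      have := hneg z ⟨hz.1, by linarith [hz.2]⟩
      have h3 : μ * δ ≤ μ * (c - z) := by gcongr; linarith [hz.2]
      exact le_trans (by linarith) (neg_le_abs _)
  have h2 : ‖∫ x in min b (c + δ)..b, Complex.exp (J x * Complex.I)‖ ≤ 4 / √μ := by
    by_cases hcase : b ≤ c + δ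
    · rw [min_eq_left hcase, intervalIntegral.integral_same, norm_zero]
      positivity
    · rw [min_eq_right (not_le.1 hcase).le] at hq ⊢
      refine htail _ hq b ⟨hab, le_rfl⟩ hq.2 fun z hz => ?_
      have := hpos z ⟨by linarith [hz.1], hz.2⟩
      have h3 : μ * δ ≤ μ * (z - c) := by gcongr; linarith [hz.1]
      exact le_trans (by linarith) (le_abs_self _)
  have h3 : ‖∫ x in max a (c - δ)..min b (c + δ), Complex.exp (J x * Complex.I)‖ ≤ 2 * δ := by
    refine (norm_integral_exp_le_sub hpq J).trans ?_
    linarith [le_max_right a (c - δ), min_le_right b (c + δ)]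
  rw [← intervalIntegral.integral_add_adjacent_intervals
    (hii a ⟨le_rfl, hab⟩ _ hp) (hii _ hp b ⟨hab, le_rfl⟩),
    ← intervalIntegral.integral_add_adjacent_intervals (hii _ hp _ hq)
      (hii _ hq b ⟨hab, le_rfl⟩)]
  refine (norm_add_le _ _).trans ((add_le_add le_rfl (norm_add_le _ _)).trans ?_)
  have e1 : 4 / √μ = 4 * δ := div_eq_mul_inv _ _
  have e2 : 10 / √μ = 10 * δ := div_eq_mul_inv _ _
  rw [e1] at h1 h2
  rw [e2]
  linarith

/-- Uniform decay of `∫ exp (i (T x + u l(x))) dx` on a dyadic interval `[X, 2X]` on which `l` has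
size `lam` in the sense that `x l'(x)` is at most, and `x² l''(x)` at least, a multiple of it. -/
theorem norm_integral_exp_linear_add_le {C₁ c₂ : ℝ} (hC₁ : 1 ≤ C₁) (hc₂ : 0 < c₂) :
    ∃ C > 0, ∀ (X lam T u : ℝ) (l l₁ l₂ : ℝ → ℝ), 0 < X → 0 ≤ lam →
      (∀ x ∈ Icc X (2 * X), HasDerivAt l (l₁ x) x) →
      (∀ x ∈ Icc X (2 * X), HasDerivAt l₁ (l₂ x) x) → ContinuousOn l₂ (Icc X (2 * X)) →
      (∀ x ∈ Icc X (2 * X), |l₁ x| * X ≤ C₁ * lam) →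
      ((∀ x ∈ Icc X (2 * X), c₂ * lam ≤ l₂ x * X ^ 2) ∨
        ∀ x ∈ Icc X (2 * X), c₂ * lam ≤ -l₂ x * X ^ 2) →
      ∀ x₁ x₂, X ≤ x₁ → x₁ ≤ x₂ → x₂ ≤ 2 * X →
        ‖∫ x in x₁..x₂, Complex.exp ((T * x + u * l x : ℝ) * Complex.I)‖ *
          √(1 + |T| * X + |u| * lam) ≤ C * X := by
  refine ⟨24 + 4 * C₁ + 10 * √(4 * C₁ / c₂), by positivity, ?_⟩
  intro X lam T u l l₁ l₂ hX hlam hl hl₁ hl₂c hC hc x₁ x₂ h1 h12 h2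
  have hsub : Icc x₁ x₂ ⊆ Icc X (2 * X) := Icc_subset_Icc h1 h2
  have hr0 : 0 ≤ √(4 * C₁ / c₂) := Real.sqrt_nonneg _
  have hulam : 0 ≤ |u| * lam := by positivity
  have hTX : 0 ≤ |T| * X := by positivity
  set ρ := 1 + |T| * X + |u| * lam with hρ
  have hρ1 : 1 ≤ ρ := by linarith
  have hsρ : √ρ ≤ ρ := Real.sqrt_le_iff.2 ⟨by linarith, by nlinarith⟩
  set I := ‖∫ x in x₁..x₂, Complex.exp ((T * x + u * l x : ℝ) * Complex.I)‖ with hI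
  have hI0 : 0 ≤ I := norm_nonneg _
  have hIX : I ≤ X := (norm_integral_exp_le_sub h12 _).trans (by linarith)
  have hJ : ∀ x ∈ Icc x₁ x₂, HasDerivAt (fun x => T * x + u * l x) (T + u * l₁ x) x :=
    fun x hx => by
      simpa using ((hasDerivAt_id x).const_mul T).fun_add ((hl x (hsub hx)).const_mul u)
  have hJ₁ : ∀ x ∈ Icc x₁ x₂, HasDerivAt (fun x => T + u * l₁ x) (u * l₂ x) x :=
    fun x hx => ((hl₁ x (hsub hx)).const_mul u).const_add T
  have hJ₂ : ContinuousOn (fun x => u * l₂ x) (Icc x₁ x₂) :=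
    continuousOn_const.mul (hl₂c.mono hsub)
  have hc0 : 0 ≤ c₂ * lam := by positivity
  have hX2 : 0 < X ^ 2 := by positivity
  have hsign : (∀ x ∈ Icc x₁ x₂, c₂ * (|u| * lam) / X ^ 2 ≤ u * l₂ x) ∨
      ∀ x ∈ Icc x₁ x₂, c₂ * (|u| * lam) / X ^ 2 ≤ -(u * l₂ x) := by
    rcases hc with hc | hc <;> rcases le_total 0 u with hu | hu
    · left
      intro x hx
      rw [div_le_iff₀ hX2, abs_of_nonneg hu]
      nlinarith [mul_le_mul_of_nonneg_left (hc x (hsub hx)) hu]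
    · right
      intro x hx
      rw [div_le_iff₀ hX2, abs_of_nonpos hu]
      nlinarith [mul_le_mul_of_nonneg_left (hc x (hsub hx)) (neg_nonneg.2 hu)]
    · right
      intro x hx
      rw [div_le_iff₀ hX2, abs_of_nonneg hu]
      nlinarith [mul_le_mul_of_nonneg_left (hc x (hsub hx)) hu]
    · left
      intro x hx
      rw [div_le_iff₀ hX2, abs_of_nonpos hu]
      nlinarith [mul_le_mul_of_nonneg_left (hc x (hsub hx)) (neg_nonneg.2 hu)]
  have hμ0 : 0 ≤ c₂ * (|u| * lam) / X ^ 2 := by positivity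
  have hrX : 0 ≤ √(4 * C₁ / c₂) * X := by positivity
  have hCX : X ≤ C₁ * X := le_mul_of_one_le_left hX.le hC₁
  have hgoal : ∀ K, K ≤ 24 + 4 * C₁ + 10 * √(4 * C₁ / c₂) → I * √ρ ≤ K * X →
      I * √ρ ≤ (24 + 4 * C₁ + 10 * √(4 * C₁ / c₂)) * X := fun K hK h =>
    h.trans (mul_le_mul_of_nonneg_right hK hX.le)
  have htriv : ∀ K, ρ ≤ K → I * √ρ ≤ K * X := fun K hK => by
    rw [mul_comm]
    exact mul_le_mul (hsρ.trans hK) hIX hI0 (by linarith)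
  rcases le_or_gt (2 * C₁ * (|u| * lam)) (|T| * X) with hA | hA
  · have hA' : |u| * lam ≤ |T| * X := by nlinarith
    rcases le_or_gt (|T| * X) 1 with hT | hT
    · exact hgoal 24 (by linarith) (htriv 24 (by linarith))
    · have hT0 : 0 < |T| := pos_of_mul_pos_left (by linarith) hX.le
      have hfirst : I ≤ 4 / (|T| / 2) := by
        refine norm_integral_exp_le_of_le_abs_deriv h12 hJ hJ₁ hJ₂ (by positivity) ?_ ?_
        · intro x hx
          have h3 : |u * l₁ x| ≤ |T| / 2 := by
            rw [abs_mul]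
            have := mul_le_mul_of_nonneg_left (hC x (hsub hx)) (abs_nonneg u)
            refine le_of_mul_le_mul_right ?_ hX
            nlinarith
          have h4 := abs_sub_abs_le_abs_sub T (-(u * l₁ x))
          rw [abs_neg, sub_neg_eq_add] at h4
          linarith
        · rcases hsign with h | h
          · exact Or.inl fun x hx => hμ0.trans (h x hx)
          · exact Or.inr fun x hx => by linarith [h x hx]
      refine hgoal 24 (by linarith) ?_
      calc I * √ρ ≤ 4 / (|T| / 2) * (3 * (|T| * X)) := by
            refine mul_le_mul hfirst (hsρ.trans (by linarith)) (Real.sqrt_nonneg _) (by positivity)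
        _ = 24 * X := by field_simp; ring
  · rcases le_or_gt (|u| * lam) 1 with hT | hT
    · exact hgoal (4 * C₁) (by linarith) (htriv _ (by nlinarith))
    · set μ := c₂ * (|u| * lam) / X ^ 2 with hμ
      have hμ1 : 0 < μ := by positivity
      have hsecond : I ≤ 10 / √μ := by
        rcases hsign with h | h
        · exact norm_integral_exp_le_of_le_second_deriv h12 hJ hJ₁ hJ₂ hμ1 h
        · rw [hI, ← norm_integral_exp_neg]
          exact norm_integral_exp_le_of_le_second_deriv h12 (fun x hx => (hJ x hx).neg)
            (fun x hx => (hJ₁ x hx).neg) hJ₂.neg hμ1 h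
      have hρμ : ρ ≤ 4 * C₁ / c₂ * X ^ 2 * μ := by
        have : 4 * C₁ / c₂ * X ^ 2 * μ = 4 * C₁ * (|u| * lam) := by rw [hμ]; field_simp
        rw [this]
        nlinarith
      have hsρμ : √ρ ≤ √(4 * C₁ / c₂) * X * √μ := by
        refine (Real.sqrt_le_sqrt hρμ).trans_eq ?_
        rw [Real.sqrt_mul (by positivity), Real.sqrt_mul (by positivity), Real.sqrt_sq hX.le]
      refine hgoal (10 * √(4 * C₁ / c₂)) (by linarith) ?_
      have hsμ : 0 < √μ := Real.sqrt_pos.2 hμ1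
      calc I * √ρ ≤ 10 / √μ * (√(4 * C₁ / c₂) * X * √μ) :=
            mul_le_mul hsecond hsρμ (Real.sqrt_nonneg _) (by positivity)
        _ = 10 * √(4 * C₁ / c₂) * X := by field_simp

theorem norm_setIntegral_mul_le_of_primitive {p q Θ B : ℝ} {ψ ψ' β : ℝ → ℝ} {θ : ℝ → ℂ}
    (hψ : ∀ x ∈ Ioo p q, HasDerivAt ψ (ψ' x) x) (hψ' : ContinuousOn ψ' (Ioo p q))
    (hθ : ContinuousOn θ (Ioo p q)) (hΘ0 : 0 ≤ Θ) (hB0 : 0 ≤ B)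
    (hΘ : ∀ x₁ x₂, p < x₁ → x₁ ≤ x₂ → x₂ < q → ‖∫ x in x₁..x₂, θ x‖ ≤ Θ)
    (hB : ∀ x ∈ Ioo p q, |ψ x| ≤ B) (hβ : ∀ x ∈ Ioo p q, |ψ' x| ≤ β x)
    (hβi : IntegrableOn β (Ioo p q)) :
    ‖∫ x in Ioo p q, (ψ x : ℂ) * θ x‖ ≤ Θ * (B + ∫ x in Ioo p q, β x) := by
  have hβ0 : 0 ≤ ∫ x in Ioo p q, β x :=
    setIntegral_nonneg measurableSet_Ioo fun x hx => (abs_nonneg _).trans (hβ x hx)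
  rcases le_or_gt q p with hpq | hpq
  · rw [Ioo_eq_empty (not_lt.2 hpq)] at hβ0 ⊢
    simp only [Measure.restrict_empty, integral_zero_measure, norm_zero]
    positivity
  by_cases hi : IntegrableOn (fun x => (ψ x : ℂ) * θ x) (Ioo p q)
  swap
  · rw [integral_undef hi, norm_zero]
    positivity
  have hcompact : ∀ x₁ x₂, p < x₁ → x₁ ≤ x₂ → x₂ < q →
      ‖∫ x in x₁..x₂, (ψ x : ℂ) * θ x‖ ≤ Θ * (B + ∫ x in Ioo p q, β x) := by
    intro x₁ x₂ h1 h12 h2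
    have hu : uIcc x₁ x₂ = Icc x₁ x₂ := uIcc_of_le h12
    have hsub : Icc x₁ x₂ ⊆ Ioo p q := fun x hx => ⟨h1.trans_le hx.1, hx.2.trans_lt h2⟩
    have hθi : IntervalIntegrable θ volume x₁ x₂ := (hθ.mono (hu.le.trans hsub)).intervalIntegrable
    have hΨ : ∀ x ∈ uIcc x₁ x₂, HasDerivAt (fun y => ∫ z in x₁..y, θ z) (θ x) x := by
      intro x hx
      rw [hu] at hx
      refine intervalIntegral.integral_hasDerivAt_right
        ((hθ.mono ?_).intervalIntegrable) ?_ (hθ.continuousAt (isOpen_Ioo.mem_nhds (hsub hx)))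
      · rw [uIcc_of_le hx.1]
        exact (Icc_subset_Icc_right hx.2).trans hsub
      · exact hθ.stronglyMeasurableAtFilter isOpen_Ioo x (hsub hx)
    have hψ'i : IntervalIntegrable (fun x => (ψ' x : ℂ)) volume x₁ x₂ :=
      ((Complex.continuous_ofReal.comp_continuousOn hψ').mono (hu.le.trans hsub)).intervalIntegrable
    rw [intervalIntegral.integral_mul_deriv_eq_deriv_mul
      (fun x hx => (hψ x (hsub (hu ▸ hx))).ofReal_comp) hΨ hψ'i hθi]
    rw [intervalIntegral.integral_same, mul_zero, sub_zero]
    have hβi' : IntervalIntegrable β volume x₁ x₂ :=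
      (intervalIntegrable_iff_integrableOn_Icc_of_le h12).2 (hβi.mono_set hsub)
    have hb2 : ‖∫ x in x₁..x₂, (ψ' x : ℂ) * ∫ z in x₁..x, θ z‖ ≤ ∫ x in x₁..x₂, Θ * β x := by
      refine intervalIntegral.norm_integral_le_of_norm_le h12 ?_ (hβi'.const_mul Θ)
      refine Eventually.of_forall fun x hx => ?_
      rw [norm_mul, Complex.norm_real, Real.norm_eq_abs, mul_comm]
      have hx' : x ∈ Icc x₁ x₂ := Ioc_subset_Icc_self hx
      exact mul_le_mul (hΘ x₁ x h1 hx'.1 (hsub hx').2) (hβ x (hsub hx')) (abs_nonneg _) hΘ0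
    have hb3 : ∫ x in x₁..x₂, β x ≤ ∫ x in Ioo p q, β x := by
      rw [intervalIntegral.integral_of_le h12]
      refine setIntegral_mono_set hβi ?_ (Ioc_subset_Icc_self.trans hsub).eventuallyLE
      exact (ae_restrict_iff' measurableSet_Ioo).2
        (Eventually.of_forall fun x hx => (abs_nonneg _).trans (hβ x hx))
    rw [intervalIntegral.integral_const_mul] at hb2
    have hb1 : ‖(ψ x₂ : ℂ) * ∫ z in x₁..x₂, θ z‖ ≤ Θ * B := by
      rw [norm_mul, Complex.norm_real, Real.norm_eq_abs, mul_comm]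
      exact mul_le_mul (hΘ x₁ x₂ h1 h12 h2) (hB _ (hsub ⟨h12, le_rfl⟩)) (abs_nonneg _) hΘ0
    refine (norm_sub_le _ _).trans ?_
    rw [mul_add]
    exact add_le_add hb1 (hb2.trans (mul_le_mul_of_nonneg_left hb3 hΘ0))
  obtain ⟨a, ha⟩ := exists_seq_strictAnti_tendsto' hpq
  obtain ⟨b, hb⟩ := exists_seq_strictMono_tendsto' (ha.2.1 0).2
  have hab : ∀ n, a n ≤ b n := fun n => (ha.1.antitone (Nat.zero_le n)).trans (hb.2.1 n).1.le
  have hcov := aecover_Ioo_of_Icc (μ := volume) ha.2.2 hb.2.2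
  have hlim := hcov.integral_tendsto_of_countably_generated hi
  refine le_of_tendsto hlim.norm (Eventually.of_forall fun n => ?_)
  have hsub : Icc (a n) (b n) ⊆ Ioo p q :=
    fun x hx => ⟨(ha.2.1 n).1.trans_le hx.1, hx.2.trans_lt (hb.2.1 n).2⟩
  rw [Measure.restrict_restrict measurableSet_Icc, inter_eq_left.2 hsub,
    integral_Icc_eq_integral_Ioc, ← intervalIntegral.integral_of_le (hab n)]
  exact hcompact _ _ (ha.2.1 n).1 (hab n) (hb.2.1 n).2

theorem norm_integral_exp_const_mul_le {u : ℝ} (hu : u ≠ 0) (a b : ℝ) :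
    ‖∫ y in a..b, Complex.exp ((u * y : ℝ) * Complex.I)‖ ≤ 2 / |u| := by
  have h : ∀ y : ℝ, Complex.exp ((u * y : ℝ) * Complex.I) = Complex.exp ((u * Complex.I) * y) :=
    fun y => by congr 1; push_cast; ring
  have hc : (u * Complex.I : ℂ) ≠ 0 := mul_ne_zero (by exact_mod_cast hu) Complex.I_ne_zero
  simp_rw [h]
  rw [integral_exp_mul_complex hc, norm_div, norm_mul, Complex.norm_I, mul_one, Complex.norm_real,
    Real.norm_eq_abs, ← h, ← h]
  gcongr
  refine (norm_sub_le _ _).trans ?_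
  rw [Complex.norm_exp_ofReal_mul_I, Complex.norm_exp_ofReal_mul_I]
  norm_num

theorem rpow_le_rpow_abs_mul {K y z : ℝ} (b : ℝ) (hK : 1 ≤ K) (hz : 0 < z) (h1 : z / K ≤ y)
    (h2 : y ≤ K * z) : y ^ b ≤ K ^ |b| * z ^ b := by
  have hK0 : 0 < K := by linarith
  have hy : 0 < y := lt_of_lt_of_le (by positivity) h1
  have hyz : y ^ b = (y / z) ^ b * z ^ b := by
    rw [← Real.mul_rpow (by positivity) hz.le, div_mul_cancel₀ _ hz.ne']
  rw [hyz]
  gcongr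
  have h3 : y / z ≤ K := (div_le_iff₀ hz).2 h2
  have h4 : K⁻¹ ≤ y / z := by rw [le_div_iff₀ hz, inv_mul_eq_div]; exact h1
  rcases le_total 0 b with hb | hb
  · rw [abs_of_nonneg hb]
    exact Real.rpow_le_rpow (by positivity) h3 hb
  · rw [abs_of_nonpos hb, Real.rpow_neg hK0.le, ← Real.inv_rpow hK0.le]
    exact Real.rpow_le_rpow_of_nonpos (by positivity) h4 hb

theorem rpow_le_rpow_add_rpow {p q y : ℝ} (b : ℝ) (hp : 0 < p) (h1 : p ≤ y) (h2 : y ≤ q) :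
    y ^ b ≤ p ^ b + q ^ b := by
  have hy : 0 < y := hp.trans_le h1
  have hq : 0 < q := hy.trans_le h2
  rcases le_total 0 b with hb | hb
  · linarith [Real.rpow_le_rpow hy.le h2 hb, Real.rpow_nonneg hp.le b]
  · linarith [Real.rpow_le_rpow_of_nonpos hp h1 hb, Real.rpow_nonneg hq.le b]

theorem setLIntegral_rpow_le_of_comparable {κ z : ℝ} (b : ℝ) (hκ : 1 ≤ κ) (hz : 0 < z)
    {s s' : Set ℝ} (hs : MeasurableSet s) (hs' : MeasurableSet s')
    (hsz : s ⊆ Icc (z / κ) (κ * z)) (hsz' : s' ⊆ Icc (z / κ) (κ * z))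
    (hvol : volume s ≤ ENNReal.ofReal κ * volume s') :
    ∫⁻ y in s, ENNReal.ofReal (y ^ b) ≤
      ENNReal.ofReal (κ ^ |b| * κ ^ |b| * κ) * ∫⁻ y in s', ENNReal.ofReal (y ^ b) := by
  have hκ0 : 0 < κ := by linarith
  have hup : ∫⁻ y in s, ENNReal.ofReal (y ^ b) ≤ ENNReal.ofReal (κ ^ |b| * z ^ b) * volume s := by
    rw [← setLIntegral_const]
    exact setLIntegral_mono' hs fun y hy => ENNReal.ofReal_le_ofReal
      (rpow_le_rpow_abs_mul b hκ hz (hsz hy).1 (hsz hy).2)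
  have hlow : ENNReal.ofReal (z ^ b) * volume s' ≤
      ENNReal.ofReal (κ ^ |b|) * ∫⁻ y in s', ENNReal.ofReal (y ^ b) := by
    rw [← setLIntegral_const, ← lintegral_const_mul' _ _ ENNReal.ofReal_ne_top]
    refine setLIntegral_mono' hs' fun y hy => ?_
    rw [← ENNReal.ofReal_mul (by positivity)]
    have h := hsz' hy
    have hy0 : 0 < y := lt_of_lt_of_le (by positivity) h.1
    refine ENNReal.ofReal_le_ofReal (rpow_le_rpow_abs_mul b hκ hy0 ?_ ?_)
    · rw [div_le_iff₀ hκ0]; linarith [h.2]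
    · have := (div_le_iff₀ hκ0).1 h.1
      linarith
  calc ∫⁻ y in s, ENNReal.ofReal (y ^ b)
      ≤ ENNReal.ofReal (κ ^ |b| * z ^ b) * (ENNReal.ofReal κ * volume s') :=
        hup.trans (mul_le_mul_right hvol _)
    _ = ENNReal.ofReal (κ ^ |b| * κ) * (ENNReal.ofReal (z ^ b) * volume s') := by
        rw [ENNReal.ofReal_mul (by positivity), ENNReal.ofReal_mul (by positivity)]
        ring
    _ ≤ ENNReal.ofReal (κ ^ |b| * κ) *
        (ENNReal.ofReal (κ ^ |b|) * ∫⁻ y in s', ENNReal.ofReal (y ^ b)) :=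
        mul_le_mul_right hlow _
    _ = _ := by
        rw [← mul_assoc, ← ENNReal.ofReal_mul (by positivity)]
        congr 2
        ring

/-- Enlarging an interval by a bounded factor at both ends enlarges the integral of a power by a
bounded factor, provided the interval is long enough. -/
theorem setLIntegral_rpow_Ioo_le {κ : ℝ} (b : ℝ) (hκ : 1 ≤ κ) :
    ∃ K > 0, ∀ q Q q' P' : ℝ, 0 ≤ q' → κ * q' < P' → q' / κ ≤ q → Q ≤ κ * P' →
      ∫⁻ y in Ioo q Q, ENNReal.ofReal (y ^ b) ≤
        ENNReal.ofReal K * ∫⁻ y in Ioo q' P', ENNReal.ofReal (y ^ b) := by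
  have hκ0 : 0 < κ := by linarith
  refine ⟨κ ^ |b| * κ ^ |b| * κ + 1 + κ ^ |b| * κ ^ |b| * κ, by positivity, ?_⟩
  intro q Q q' P' hq' hqP hq hQ
  have hq'κ : q' ≤ κ * q' := le_mul_of_one_le_left hq' hκ
  have hP' : 0 < P' := lt_of_le_of_lt (by positivity) hqP
  have hP'κ : P' ≤ κ * P' := le_mul_of_one_le_left hP'.le hκ
  have hdiv : ∀ z : ℝ, 0 ≤ z → z / κ ≤ z := fun z hz => div_le_self hz hκ
  have hsub : Ioo q Q ⊆ (Ioc (q' / κ) q' ∪ Ioo q' P') ∪ Ico P' (κ * P') := by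
    intro y hy
    rcases le_or_gt y q' with h | h
    · exact Or.inl (Or.inl ⟨hq.trans_lt hy.1, h⟩)
    · rcases lt_or_ge y P' with h' | h'
      · exact Or.inl (Or.inr ⟨h, h'⟩)
      · exact Or.inr ⟨h', hy.2.trans_le hQ⟩
  refine (lintegral_mono_set hsub).trans ((lintegral_union_le _ _ _).trans ?_)
  refine (add_le_add (lintegral_union_le _ _ _) le_rfl).trans ?_
  rw [ENNReal.ofReal_add (by positivity) (by positivity),
    ENNReal.ofReal_add (by positivity) (by positivity), add_mul, add_mul, ENNReal.ofReal_one,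
    one_mul]
  refine add_le_add (add_le_add ?_ le_rfl) ?_
  · rcases hq'.eq_or_lt with h0 | h0
    · simp [← h0]
    · refine (setLIntegral_rpow_le_of_comparable b hκ h0 measurableSet_Ioc
        (measurableSet_Ioo (a := q') (b := κ * q')) ?_ ?_ ?_).trans
        (mul_le_mul_right (lintegral_mono_set (Ioo_subset_Ioo_right hqP.le)) _)
      · exact fun y hy => ⟨hy.1.le, hy.2.trans hq'κ⟩
      · exact fun y hy => ⟨(hdiv _ hq').trans hy.1.le, hy.2.le⟩
      · rw [Real.volume_Ioc, Real.volume_Ioo, ← ENNReal.ofReal_mul hκ0.le]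
        refine ENNReal.ofReal_le_ofReal ?_
        have : q' - q' / κ = (κ * q' - q') / κ := by field_simp
        rw [this]
        have h3 : 0 ≤ κ * q' - q' := by linarith
        exact (div_le_self h3 hκ).trans (le_mul_of_one_le_left h3 hκ)
  · have hq'P : q' ≤ P' / κ := by rw [le_div_iff₀ hκ0]; linarith
    refine (setLIntegral_rpow_le_of_comparable b hκ hP' measurableSet_Ico
        (measurableSet_Ioo (a := P' / κ) (b := P')) ?_ ?_ ?_).trans
        (mul_le_mul_right (lintegral_mono_set (Ioo_subset_Ioo_left hq'P)) _)
    · exact fun y hy => ⟨(hdiv _ hP'.le).trans hy.1, hy.2.le⟩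
    · exact fun y hy => ⟨hy.1.le, hy.2.le.trans hP'κ⟩
    · rw [Real.volume_Ico, Real.volume_Ioo, ← ENNReal.ofReal_mul hκ0.le]
      refine ENNReal.ofReal_le_ofReal (le_of_eq ?_)
      field_simp

theorem IsOpen.eq_Ioo_of_ordConnected {s : Set ℝ} (hs : IsOpen s) (hc : s.OrdConnected)
    (hne : s.Nonempty) (hb : BddBelow s) (ha : BddAbove s) : s = Ioo (sInf s) (sSup s) := by
  have hconn : IsConnected s := ⟨hne, hc.isPreconnected⟩
  refine Subset.antisymm (fun x hx => ?_) (hconn.Ioo_csInf_csSup_subset hb ha)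
  obtain ⟨ε, hε, hball⟩ := Metric.isOpen_iff.1 hs x hx
  constructor
  · refine lt_of_le_of_lt (csInf_le hb (hball (?_ : x - ε / 2 ∈ _))) (by linarith)
    rw [Metric.mem_ball, Real.dist_eq, abs_lt]
    constructor <;> linarith
  · refine lt_of_lt_of_le (by linarith) (le_csSup ha (hball (?_ : x + ε / 2 ∈ _)))
    rw [Metric.mem_ball, Real.dist_eq, abs_lt]
    constructor <;> linarith

theorem enorm_setIntegral_le_lintegral_fst {A : Set (ℝ × ℝ)} (hA : MeasurableSet A)
    {f : ℝ × ℝ → ℂ} (hf : IntegrableOn f A) :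
    ‖∫ q in A, f q‖ₑ ≤ ∫⁻ x, ‖∫ y in Prod.mk x ⁻¹' A, f (x, y)‖ₑ := by
  rw [← integral_indicator hA, Measure.volume_eq_prod, integral_prod _
    (by rw [← Measure.volume_eq_prod]; exact (integrable_indicator_iff hA).2 hf)]
  refine (enorm_integral_le_lintegral_enorm _).trans (lintegral_mono fun x => ?_)
  rw [← integral_indicator (measurable_prodMk_left hA)]
  rfl

theorem enorm_setIntegral_le_lintegral_snd {A : Set (ℝ × ℝ)} (hA : MeasurableSet A)
    {f : ℝ × ℝ → ℂ} (hf : IntegrableOn f A) :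
    ‖∫ q in A, f q‖ₑ ≤ ∫⁻ y, ‖∫ x in (fun x => (x, y)) ⁻¹' A, f (x, y)‖ₑ := by
  rw [← integral_indicator hA, Measure.volume_eq_prod, integral_prod_symm _
    (by rw [← Measure.volume_eq_prod]; exact (integrable_indicator_iff hA).2 hf)]
  refine (enorm_integral_le_lintegral_enorm _).trans (lintegral_mono fun y => ?_)
  rw [← integral_indicator (measurable_prodMk_right hA)]
  rfl

theorem setLIntegral_eq_lintegral_fst {A : Set (ℝ × ℝ)} (hA : MeasurableSet A)
    {w : ℝ × ℝ → ℝ≥0∞} (hw : Measurable w) :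
    ∫⁻ q in A, w q = ∫⁻ x, ∫⁻ y in Prod.mk x ⁻¹' A, w (x, y) := by
  rw [← lintegral_indicator hA, Measure.volume_eq_prod,
    lintegral_prod _ (hw.indicator hA).aemeasurable]
  refine lintegral_congr fun x => ?_
  rw [← lintegral_indicator (measurable_prodMk_left hA)]
  rfl

/-- Integration by parts in a variable `y ∈ (p, q)` against `exp (i u y)`. -/
theorem enorm_setIntegral_mul_exp_le (b : ℝ) :
    ∃ C > 0, ∀ (u p q B : ℝ) (ψ ψ' : ℝ → ℝ), u ≠ 0 → 0 < p → 2 * p ≤ q → 0 ≤ B →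
      (∀ y ∈ Ioo p q, HasDerivAt ψ (ψ' y) y) → ContinuousOn ψ' (Ioo p q) →
      (∀ y ∈ Ioo p q, |ψ y| ≤ B * y ^ b) → (∀ y ∈ Ioo p q, |ψ' y| ≤ B * y ^ (b - 1)) →
      ‖∫ y in Ioo p q, (ψ y : ℂ) * Complex.exp ((u * y : ℝ) * Complex.I)‖ₑ ≤
        ENNReal.ofReal (C * B / |u|) * ∫⁻ y in Ioo p q, ENNReal.ofReal (y ^ (b - 1)) := by
  set K : ℝ := 2 ^ |b - 1| with hK
  have hK0 : 0 < K := by positivity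
  refine ⟨2 * (3 * K + 1), by positivity, ?_⟩
  intro u p q B ψ ψ' hu hp hpq hB hψ hψ' h0 h1
  have hq : 0 < q := by linarith
  have hplq : p ≤ q := by linarith
  have hcont : ContinuousOn (fun y : ℝ => y ^ (b - 1)) (Icc p q) :=
    continuousOn_id.rpow_const fun y hy => Or.inl (hp.trans_le hy.1).ne'
  have hint : IntegrableOn (fun y : ℝ => y ^ (b - 1)) (Ioo p q) :=
    (hcont.integrableOn_Icc).mono_set Ioo_subset_Icc_self
  have hpos : ∀ y ∈ Ioo p q, 0 ≤ y ^ (b - 1) := fun y hy => Real.rpow_nonneg (hp.trans hy.1).le _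
  set I := ∫ y in Ioo p q, y ^ (b - 1) with hI
  have hI0 : 0 ≤ I := setIntegral_nonneg measurableSet_Ioo hpos
  have hsub : ∀ z c d : ℝ, 0 < z → Ioo c d ⊆ Ioo p q → Ioo c d ⊆ Icc (z / 2) (2 * z) → c ≤ d →
      (d - c) * z ^ (b - 1) ≤ K * I := by
    intro z c d hz hcd hcz hcd'
    have e1 : ∫ _y in Ioo c d, z ^ (b - 1) = (d - c) * z ^ (b - 1) := by
      rw [setIntegral_const, measureReal_def, Real.volume_Ioo,
        ENNReal.toReal_ofReal (by linarith), smul_eq_mul]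
    rw [← e1, hI, ← integral_const_mul]
    calc ∫ _y in Ioo c d, z ^ (b - 1) ≤ ∫ y in Ioo c d, K * y ^ (b - 1) := by
          refine setIntegral_mono_on (integrableOn_const (by simp)) ((hint.mono_set hcd).const_mul K)
            measurableSet_Ioo fun y hy => ?_
          have hy' := hcz hy
          refine rpow_le_rpow_abs_mul _ one_le_two (hp.trans (hcd hy).1) ?_ ?_ <;>
            linarith [hy'.1, hy'.2]
      _ ≤ ∫ y in Ioo p q, K * y ^ (b - 1) := by
          refine setIntegral_mono_set (hint.const_mul K) ?_ hcd.eventuallyLE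
          exact (ae_restrict_iff' measurableSet_Ioo).2
            (Eventually.of_forall fun y hy => mul_nonneg hK0.le (hpos y hy))
  have hpb : p ^ b ≤ K * I := by
    have := hsub p p (2 * p) hp (Ioo_subset_Ioo_right hpq)
      (fun y hy => ⟨by linarith [hy.1], hy.2.le⟩) (by linarith)
    have e : (2 * p - p) * p ^ (b - 1) = p ^ b := by
      rw [Real.rpow_sub_one hp.ne']; field_simp; ring
    linarith
  have hqb : q ^ b ≤ 2 * K * I := by
    have := hsub q (q / 2) q hq (Ioo_subset_Ioo_left (by linarith))
      (fun y hy => ⟨hy.1.le, by linarith [hy.2]⟩) (by linarith)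
    have e : (q - q / 2) * q ^ (b - 1) = q ^ b / 2 := by
      rw [Real.rpow_sub_one hq.ne']; field_simp; ring
    linarith
  have hmain := norm_setIntegral_mul_le_of_primitive (Θ := 2 / |u|) (B := B * (p ^ b + q ^ b))
    (β := fun y => B * y ^ (b - 1)) (θ := fun y => Complex.exp ((u * y : ℝ) * Complex.I)) hψ hψ'
    (by fun_prop) (by positivity) (by positivity)
    (fun x₁ x₂ _ _ _ => norm_integral_exp_const_mul_le hu x₁ x₂)
    (fun y hy => (h0 y hy).trans (mul_le_mul_of_nonneg_left
      (rpow_le_rpow_add_rpow b hp hy.1.le hy.2.le) hB)) h1 (hint.const_mul B)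
  rw [← ofReal_integral_eq_lintegral_ofReal hint
    ((ae_restrict_iff' measurableSet_Ioo).2 (Eventually.of_forall hpos)),
    ← ENNReal.ofReal_mul (by positivity), ← ofReal_norm]
  refine ENNReal.ofReal_le_ofReal (hmain.trans ?_)
  rw [integral_const_mul, ← hI]
  calc 2 / |u| * (B * (p ^ b + q ^ b) + B * I) ≤ 2 / |u| * (B * (K * I + 2 * K * I) + B * I) := by
        gcongr
    _ = _ := by ring

/-- The part of a sliver over the interval `(X, 2X)`. -/
def dyadicStrip (X : ℝ) (g G : ℝ → ℝ) : Set (ℝ × ℝ) :=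
  {q | q.1 ∈ Ioo X (2 * X) ∧ q.2 ∈ Ioo (g q.1) (G q.1)}

/-- The integrand `ψ(x,y) exp (i (J(x) + u y))`. -/
noncomputable def phaseIntegrand (ψ : ℝ × ℝ → ℝ) (J : ℝ → ℝ) (u : ℝ) (q : ℝ × ℝ) : ℂ :=
  (ψ q : ℂ) * Complex.exp ((J q.1 + u * q.2 : ℝ) * Complex.I)

/-- Hypotheses for the oscillatory integral estimate on a dyadic strip: the bounding curves are
increasing, doubling and well separated, the amplitude `ψ` behaves like `y ^ b`, and
`∫ exp (i J)` over subintervals of `[X, 2X]` gains a factor `ρ ^ (-1/2)`. -/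
structure StripHyp (b κ C₀ X ρ u B : ℝ) (g G J : ℝ → ℝ) (ψ ψx ψy : ℝ × ℝ → ℝ) : Prop where
  X_pos : 0 < X
  one_le_ρ : 1 ≤ ρ
  B_nonneg : 0 ≤ B
  mono_g : MonotoneOn g (Icc X (2 * X))
  mono_G : MonotoneOn G (Icc X (2 * X))
  g_nonneg : 0 ≤ g X
  g_doubling : g (2 * X) ≤ κ * g X
  G_doubling : G (2 * X) ≤ κ * G X
  G_pos : 0 < G X
  separated : 2 * κ * g (2 * X) < G X
  isOpen : IsOpen (dyadicStrip X g G)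
  J_cont : ContinuousOn J (Icc X (2 * X))
  osc : ∀ x₁ x₂, X ≤ x₁ → x₁ ≤ x₂ → x₂ ≤ 2 * X →
    ‖∫ x in x₁..x₂, Complex.exp (J x * Complex.I)‖ ≤ C₀ * X / √ρ
  hasDeriv_x : ∀ q ∈ dyadicStrip X g G, HasDerivAt (fun x => ψ (x, q.2)) (ψx q) q.1
  hasDeriv_y : ∀ q ∈ dyadicStrip X g G, HasDerivAt (fun y => ψ (q.1, y)) (ψy q) q.2
  cont_x : ContinuousOn ψx (dyadicStrip X g G)
  cont_y : ContinuousOn ψy (dyadicStrip X g G)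
  bound : ∀ q ∈ dyadicStrip X g G, |ψ q| ≤ B * q.2 ^ b
  bound_x : ∀ q ∈ dyadicStrip X g G, |ψx q| ≤ B * q.2 ^ b / X
  bound_y : ∀ q ∈ dyadicStrip X g G, |ψy q| ≤ B * q.2 ^ (b - 1)
  integrable : IntegrableOn (phaseIntegrand ψ J u) (dyadicStrip X g G)

theorem phaseIntegrand_eq (ψ : ℝ × ℝ → ℝ) (J : ℝ → ℝ) (u x y : ℝ) :
    phaseIntegrand ψ J u (x, y) = Complex.exp (J x * Complex.I) *
      ((ψ (x, y) : ℂ) * Complex.exp ((u * y : ℝ) * Complex.I)) := by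
  simp only [phaseIntegrand]
  rw [mul_left_comm, ← Complex.exp_add]
  congr 2
  push_cast
  ring

theorem measurable_stripWeight (b ρ u : ℝ) :
    Measurable fun q : ℝ × ℝ => ENNReal.ofReal ((√(ρ + |u| * q.2))⁻¹ * q.2 ^ b) := by
  fun_prop

namespace StripHyp

variable {b κ C₀ X ρ u B : ℝ} {g G J : ℝ → ℝ} {ψ ψx ψy : ℝ × ℝ → ℝ}

theorem g_nonneg_of_mem (h : StripHyp b κ C₀ X ρ u B g G J ψ ψx ψy) {x : ℝ}
    (hx : x ∈ Icc X (2 * X)) : 0 ≤ g x :=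
  h.g_nonneg.trans (h.mono_g ⟨le_rfl, by linarith [h.X_pos]⟩ hx hx.1)

/-- The part of the strip above a height `p`, by integration by parts in `y`. -/
theorem enorm_integral_upper_le (b : ℝ) {c : ℝ} (hc : 0 ≤ c) :
    ∃ C > 0, ∀ (κ C₀ X ρ u B : ℝ) (g G J : ℝ → ℝ) (ψ ψx ψy : ℝ × ℝ → ℝ),
      StripHyp b κ C₀ X ρ u B g G J ψ ψx ψy → ∀ p : ℝ, u ≠ 0 →
      (∀ x ∈ Ioo X (2 * X), 0 < max (g x) p ∧ 2 * max (g x) p ≤ G x ∧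
        ρ ≤ c * (|u| * max (g x) p)) →
      ‖∫ q in dyadicStrip X g G ∩ {q | p < q.2}, phaseIntegrand ψ J u q‖ₑ ≤
        ENNReal.ofReal (C * B) * ∫⁻ q in dyadicStrip X g G ∩ {q | p < q.2},
          ENNReal.ofReal ((√(ρ + |u| * q.2))⁻¹ * q.2 ^ b) := by
  obtain ⟨C, hC, hmain⟩ := enorm_setIntegral_mul_exp_le b
  refine ⟨C * (1 + c), by positivity, ?_⟩
  intro κ C₀ X ρ u B g G J ψ ψx ψy h p hu hp
  have hA : MeasurableSet (dyadicStrip X g G ∩ {q | p < q.2}) :=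
    h.isOpen.measurableSet.inter (measurableSet_lt measurable_const measurable_snd)
  have hB := h.B_nonneg
  have hu0 : 0 < |u| := abs_pos.2 hu
  refine (enorm_setIntegral_le_lintegral_fst hA (h.integrable.mono_set inter_subset_left)).trans ?_
  rw [setLIntegral_eq_lintegral_fst hA (measurable_stripWeight b ρ u),
    ← lintegral_const_mul' _ _ ENNReal.ofReal_ne_top]
  refine lintegral_mono fun x => ?_
  by_cases hx : x ∈ Ioo X (2 * X)
  swap
  · have : Prod.mk x ⁻¹' (dyadicStrip X g G ∩ {q | p < q.2}) = ∅ := by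
      ext y
      simp only [mem_preimage, mem_inter_iff, dyadicStrip, mem_ofPred_eq, mem_empty_iff_false,
        iff_false]
      exact fun hy => hx hy.1.1
    simp [this]
  have hslice : Prod.mk x ⁻¹' (dyadicStrip X g G ∩ {q | p < q.2}) = Ioo (max (g x) p) (G x) := by
    ext y
    simp only [mem_preimage, mem_inter_iff, dyadicStrip, mem_ofPred_eq, mem_Ioo, max_lt_iff]
    exact ⟨fun hy => ⟨⟨hy.1.2.1, hy.2⟩, hy.1.2.2⟩, fun hy => ⟨⟨hx, hy.1.1, hy.2⟩, hy.1.2⟩⟩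
  have hmem : ∀ y ∈ Ioo (max (g x) p) (G x), (x, y) ∈ dyadicStrip X g G :=
    fun y hy => ⟨hx, (le_max_left _ _).trans_lt hy.1, hy.2⟩
  obtain ⟨hp0, hpG, hpρ⟩ := hp x hx
  rw [hslice]
  simp_rw [phaseIntegrand_eq]
  rw [integral_const_mul, enorm_mul]
  have hone : ‖Complex.exp (J x * Complex.I)‖ₑ = 1 := by
    rw [← ofReal_norm, Complex.norm_exp_ofReal_mul_I, ENNReal.ofReal_one]
  rw [hone, one_mul]
  refine (hmain u _ _ B (fun y => ψ (x, y)) (fun y => ψy (x, y)) hu hp0 hpG hB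
    (fun y hy => h.hasDeriv_y _ (hmem y hy))
    (h.cont_y.comp (by fun_prop) fun y hy => hmem y hy)
    (fun y hy => h.bound _ (hmem y hy)) (fun y hy => h.bound_y _ (hmem y hy))).trans ?_
  rw [← lintegral_const_mul' _ _ ENNReal.ofReal_ne_top,
    ← lintegral_const_mul' _ _ ENNReal.ofReal_ne_top]
  refine setLIntegral_mono' measurableSet_Ioo fun y hy => ?_
  rw [← ENNReal.ofReal_mul (by positivity), ← ENNReal.ofReal_mul (by positivity)]
  refine ENNReal.ofReal_le_ofReal ?_
  have hy0 : 0 < y := hp0.trans hy.1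
  have hρy : ρ ≤ c * (|u| * y) := hpρ.trans (by gcongr; exact hy.1.le)
  have huy : 0 < |u| * y := by positivity
  have hρ1 := h.one_le_ρ
  set R := ρ + |u| * y with hR
  have hR1 : 1 ≤ R := by linarith
  have hsR : √R ≤ (1 + c) * (|u| * y) :=
    (Real.sqrt_le_iff.2 ⟨by linarith, by nlinarith⟩ : √R ≤ R).trans (by linarith)
  have hsR0 : 0 < √R := Real.sqrt_pos.2 (by linarith)
  have hinv : (|u| * y)⁻¹ ≤ (1 + c) * (√R)⁻¹ := by
    rw [← div_eq_mul_inv, le_div_iff₀ hsR0, inv_mul_le_iff₀ huy]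
    linarith
  have hyb : 0 < y ^ b := by positivity
  calc C * B / |u| * y ^ (b - 1) = C * B * ((|u| * y)⁻¹ * y ^ b) := by
        rw [Real.rpow_sub_one hy0.ne', mul_inv]; ring
    _ ≤ C * B * ((1 + c) * (√R)⁻¹ * y ^ b) := by gcongr
    _ = _ := by ring

/-- The part of the strip below a height `P`, by integration by parts in `x`. -/
theorem enorm_integral_lower_le_mul (h : StripHyp b κ C₀ X ρ u B g G J ψ ψx ψy) (hC₀ : 0 ≤ C₀)
    (P : ℝ) :
    ‖∫ q in dyadicStrip X g G ∩ {q | q.2 ≤ P}, phaseIntegrand ψ J u q‖ₑ ≤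
      ENNReal.ofReal (2 * (C₀ * X / √ρ) * B) *
        ∫⁻ y in Ioo (g X) (min P (G (2 * X))), ENNReal.ofReal (y ^ b) := by
  have hA : MeasurableSet (dyadicStrip X g G ∩ {q | q.2 ≤ P}) :=
    h.isOpen.measurableSet.inter (measurableSet_le measurable_snd measurable_const)
  have hB := h.B_nonneg
  have hX := h.X_pos
  have hXm : X ∈ Icc X (2 * X) := ⟨le_rfl, by linarith⟩
  have hXm' : 2 * X ∈ Icc X (2 * X) := ⟨by linarith, le_rfl⟩
  refine (enorm_setIntegral_le_lintegral_snd hA (h.integrable.mono_set inter_subset_left)).trans ?_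
  rw [setLIntegral_congr (Ioo_ae_eq_Ioc (μ := volume)),
    ← lintegral_const_mul' _ _ ENNReal.ofReal_ne_top, ← lintegral_indicator measurableSet_Ioc]
  refine lintegral_mono fun y => ?_
  set s := (fun x => (x, y)) ⁻¹' (dyadicStrip X g G ∩ {q | q.2 ≤ P}) with hs
  rcases s.eq_empty_or_nonempty with he | hne
  · simp [he]
  obtain ⟨x₀, hx₀, hyP⟩ := hne
  have hyP' : y ≤ P := hyP
  have hgy : g X < y := (h.mono_g hXm (Ioo_subset_Icc_self hx₀.1) hx₀.1.1.le).trans_lt hx₀.2.1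
  have hyG : y < G (2 * X) :=
    hx₀.2.2.trans_le (h.mono_G (Ioo_subset_Icc_self hx₀.1) hXm' hx₀.1.2.le)
  have hy0 : 0 < y := h.g_nonneg.trans_lt hgy
  rw [indicator_of_mem (show y ∈ Ioc (g X) (min P (G (2 * X))) from ⟨hgy, le_min hyP' hyG.le⟩)]
  have hs' : s = (fun x => (x, y)) ⁻¹' dyadicStrip X g G := by
    ext x
    simp only [hs, mem_preimage, mem_inter_iff, mem_ofPred_eq, hyP', and_true]
  have hso : IsOpen s := hs' ▸ h.isOpen.preimage (by fun_prop)
  have hmem : ∀ x ∈ s, (x, y) ∈ dyadicStrip X g G := fun x hx => hx.1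
  have hord : s.OrdConnected := by
    refine ⟨fun x₁ h1 x₂ h2 x hx => ⟨⟨⟨?_, ?_⟩, ?_, ?_⟩, hyP⟩⟩
    · exact (hmem _ h1).1.1.trans_le hx.1
    · exact hx.2.trans_lt (hmem _ h2).1.2
    · have hx' : x ∈ Icc X (2 * X) :=
        ⟨((hmem _ h1).1.1.trans_le hx.1).le, (hx.2.trans_lt (hmem _ h2).1.2).le⟩
      exact (h.mono_g hx' (Ioo_subset_Icc_self (hmem _ h2).1) hx.2).trans_lt (hmem _ h2).2.1
    · have hx' : x ∈ Icc X (2 * X) :=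
        ⟨((hmem _ h1).1.1.trans_le hx.1).le, (hx.2.trans_lt (hmem _ h2).1.2).le⟩
      exact (hmem _ h1).2.2.trans_le (h.mono_G (Ioo_subset_Icc_self (hmem _ h1).1) hx' hx.1)
  have hbb : BddBelow s := ⟨X, fun x hx => (hmem x hx).1.1.le⟩
  have hba : BddAbove s := ⟨2 * X, fun x hx => (hmem x hx).1.2.le⟩
  have hne : s.Nonempty := ⟨x₀, hx₀, hyP⟩
  have hIoo := hso.eq_Ioo_of_ordConnected hord hne hbb hba
  have hp : X ≤ sInf s := le_csInf hne fun x hx => (hmem x hx).1.1.le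
  have hq : sSup s ≤ 2 * X := csSup_le hne fun x hx => (hmem x hx).1.2.le
  have hpq : sInf s ≤ sSup s := csInf_le_csSup hne hbb hba
  generalize sInf s = p at hIoo hp hpq
  generalize sSup s = q at hIoo hq hpq
  rw [hIoo] at hmem ⊢
  have hfact : ∀ x, phaseIntegrand ψ J u (x, y) = Complex.exp ((u * y : ℝ) * Complex.I) *
      ((ψ (x, y) : ℂ) * Complex.exp (J x * Complex.I)) := fun x => by
    rw [phaseIntegrand_eq]; ring
  simp_rw [hfact]
  rw [integral_const_mul, ← ofReal_norm, norm_mul, Complex.norm_exp_ofReal_mul_I, one_mul,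
    ← ENNReal.ofReal_mul (by positivity)]
  refine ENNReal.ofReal_le_ofReal ?_
  have hsub : Ioo p q ⊆ Icc X (2 * X) := fun x hx => ⟨hp.trans hx.1.le, hx.2.le.trans hq⟩
  refine (norm_setIntegral_mul_le_of_primitive (Θ := C₀ * X / √ρ) (B := B * y ^ b)
    (ψ' := fun x => ψx (x, y)) (β := fun _ => B * y ^ b / X)
    (fun x hx => h.hasDeriv_x _ (hmem x hx)) (h.cont_x.comp (by fun_prop) fun x hx => hmem x hx)
    (((Complex.continuous_ofReal.comp_continuousOn (h.J_cont.mono hsub)).mul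
      continuousOn_const).cexp) (by positivity) (by positivity)
    (fun x₁ x₂ h1 h12 h2 => h.osc x₁ x₂ (hp.trans h1.le) h12 (h2.le.trans hq))
    (fun x hx => h.bound _ (hmem x hx)) (fun x hx => h.bound_x _ (hmem x hx))
    (integrableOn_const (by simp))).trans ?_
  rw [setIntegral_const, measureReal_def, Real.volume_Ioo, ENNReal.toReal_ofReal (by linarith),
    smul_eq_mul]
  have hlen : (q - p) * (B * y ^ b / X) ≤ B * y ^ b := by
    rw [← mul_div_assoc, div_le_iff₀ hX, mul_comm]
    exact mul_le_mul_of_nonneg_left (by linarith) (by positivity)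
  calc C₀ * X / √ρ * (B * y ^ b + (q - p) * (B * y ^ b / X))
      ≤ C₀ * X / √ρ * (B * y ^ b + B * y ^ b) := by gcongr
    _ = _ := by ring

theorem enorm_integral_lower_le (b : ℝ) {κ C₀ c : ℝ} (hκ : 1 ≤ κ) (hC₀ : 0 < C₀) (hc : 0 ≤ c) :
    ∃ C > 0, ∀ (X ρ u B : ℝ) (g G J : ℝ → ℝ) (ψ ψx ψy : ℝ × ℝ → ℝ),
      StripHyp b κ C₀ X ρ u B g G J ψ ψx ψy → ∀ P : ℝ, κ * g (2 * X) < P →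
      |u| * min P (G (2 * X)) ≤ c * ρ →
      ‖∫ q in dyadicStrip X g G ∩ {q | q.2 ≤ P}, phaseIntegrand ψ J u q‖ₑ ≤
        ENNReal.ofReal (C * B) * ∫⁻ q in dyadicStrip X g G ∩ {q | q.2 ≤ P},
          ENNReal.ofReal ((√(ρ + |u| * q.2))⁻¹ * q.2 ^ b) := by
  obtain ⟨K, hK, hpow⟩ := setLIntegral_rpow_Ioo_le b hκ
  refine ⟨2 * C₀ * K * √(1 + c), by positivity, ?_⟩
  intro X ρ u B g G J ψ ψx ψy h P hP huP
  have hB := h.B_nonneg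
  have hX := h.X_pos
  have hρ1 := h.one_le_ρ
  have hκ0 : 0 < κ := by linarith
  have hXm : X ∈ Icc X (2 * X) := ⟨le_rfl, by linarith⟩
  have hXm' : 2 * X ∈ Icc X (2 * X) := ⟨by linarith, le_rfl⟩
  have hg2 : 0 ≤ g (2 * X) := h.g_nonneg_of_mem hXm'
  have hsρ : 0 < √ρ := Real.sqrt_pos.2 (by linarith)
  set P' := min P (G X) with hP'
  have hκP' : κ * g (2 * X) < P' := lt_min hP (by nlinarith [h.separated, mul_nonneg hκ0.le hg2])
  have hP'0 : 0 < P' := lt_of_le_of_lt (by positivity) hκP'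
  have hQ : min P (G (2 * X)) ≤ κ * P' := by
    rw [hP', mul_min_of_nonneg _ _ hκ0.le]
    refine le_min ((min_le_left _ _).trans ?_) ((min_le_right _ _).trans h.G_doubling)
    exact le_mul_of_one_le_left (hP'0.le.trans (min_le_left _ _)) hκ
  have hbox : Ioo X (2 * X) ×ˢ Ioo (g (2 * X)) P' ⊆ dyadicStrip X g G ∩ {q | q.2 ≤ P} := by
    rintro ⟨x, y⟩ ⟨hx, hy⟩
    have hx' := Ioo_subset_Icc_self hx
    exact ⟨⟨hx, (h.mono_g hx' hXm' hx'.2).trans_lt hy.1,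
      hy.2.trans_le ((min_le_right _ _).trans (h.mono_G hXm hx' hx'.1))⟩,
      hy.2.le.trans (min_le_left _ _)⟩
  refine (h.enorm_integral_lower_le_mul hC₀.le P).trans ?_
  have hq : g (2 * X) / κ ≤ g X := by rw [div_le_iff₀ hκ0]; linarith [h.g_doubling]
  refine (mul_le_mul_right (hpow (g X) _ (g (2 * X)) P' hg2 hκP' hq hQ) _).trans ?_
  refine le_trans ?_ (mul_le_mul_right (lintegral_mono_set hbox) _)
  rw [setLIntegral_eq_lintegral_fst (measurableSet_Ioo.prod measurableSet_Ioo)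
    (measurable_stripWeight b ρ u)]
  have hslices : ∫⁻ x, ∫⁻ y in Prod.mk x ⁻¹' (Ioo X (2 * X) ×ˢ Ioo (g (2 * X)) P'),
      ENNReal.ofReal ((√(ρ + |u| * y))⁻¹ * y ^ b) =
      ENNReal.ofReal X * ∫⁻ y in Ioo (g (2 * X)) P',
        ENNReal.ofReal ((√(ρ + |u| * y))⁻¹ * y ^ b) := by
    have hv : ENNReal.ofReal X = volume (Ioo X (2 * X)) := by
      rw [Real.volume_Ioo]; congr 1; ring
    rw [hv, mul_comm (volume _), ← setLIntegral_const, ← lintegral_indicator measurableSet_Ioo]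
    refine lintegral_congr fun x => ?_
    by_cases hx : x ∈ Ioo X (2 * X)
    · rw [mk_preimage_prod_right hx, indicator_of_mem hx]
    · rw [mk_preimage_prod_right_eq_empty hx, indicator_of_notMem hx]
      simp
  simp only at hslices ⊢
  rw [hslices, ← mul_assoc, ← mul_assoc, ← ENNReal.ofReal_mul (by positivity),
    ← ENNReal.ofReal_mul (by positivity), ← lintegral_const_mul' _ _ ENNReal.ofReal_ne_top,
    ← lintegral_const_mul' _ _ ENNReal.ofReal_ne_top]
  refine setLIntegral_mono' measurableSet_Ioo fun y hy => ?_
  rw [← ENNReal.ofReal_mul (by positivity), ← ENNReal.ofReal_mul (by positivity)]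
  refine ENNReal.ofReal_le_ofReal ?_
  have hy0 : 0 < y := hg2.trans_lt hy.1
  have hyQ : |u| * y ≤ c * ρ := by
    refine le_trans (mul_le_mul_of_nonneg_left (hy.2.le.trans ?_) (abs_nonneg u)) huP
    exact min_le_min_left _ (h.mono_G hXm hXm' (by linarith))
  have hR0 : 0 < ρ + |u| * y := by positivity
  have hroot : (√ρ)⁻¹ ≤ √(1 + c) * (√(ρ + |u| * y))⁻¹ := by
    rw [← div_eq_mul_inv, le_div_iff₀ (Real.sqrt_pos.2 hR0), inv_mul_le_iff₀ hsρ,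
      ← Real.sqrt_mul (by linarith)]
    exact Real.sqrt_le_sqrt (by linarith)
  calc 2 * (C₀ * X / √ρ) * B * K * y ^ b = 2 * C₀ * X * B * K * ((√ρ)⁻¹ * y ^ b) := by ring
    _ ≤ 2 * C₀ * X * B * K * (√(1 + c) * (√(ρ + |u| * y))⁻¹ * y ^ b) := by gcongr
    _ = _ := by ring

/-- The oscillatory integral estimate on a dyadic strip. -/
theorem enorm_integral_le (b : ℝ) {κ C₀ : ℝ} (hκ : 1 ≤ κ) (hC₀ : 0 < C₀) :
    ∃ C > 0, ∀ (X ρ u B : ℝ) (g G J : ℝ → ℝ) (ψ ψx ψy : ℝ × ℝ → ℝ),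
      StripHyp b κ C₀ X ρ u B g G J ψ ψx ψy →
      ‖∫ q in dyadicStrip X g G, phaseIntegrand ψ J u q‖ₑ ≤
        ENNReal.ofReal (C * B) * ∫⁻ q in dyadicStrip X g G,
          ENNReal.ofReal ((√(ρ + |u| * q.2))⁻¹ * q.2 ^ b) := by
  have hκ0 : 0 < κ := by linarith
  obtain ⟨C₁, hC₁, hup⟩ := enorm_integral_upper_le b (c := κ * κ) (by positivity)
  obtain ⟨C₂, hC₂, hlow⟩ := enorm_integral_lower_le b (c := 2 * κ) hκ hC₀ (by positivity)
  refine ⟨C₁ + C₂, by positivity, ?_⟩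
  intro X ρ u B g G J ψ ψx ψy h
  have hB := h.B_nonneg
  have hX := h.X_pos
  have hρ1 := h.one_le_ρ
  have hXm : X ∈ Icc X (2 * X) := ⟨le_rfl, by linarith⟩
  have hXm' : 2 * X ∈ Icc X (2 * X) := ⟨by linarith, le_rfl⟩
  have hg2 : 0 ≤ g (2 * X) := h.g_nonneg_of_mem hXm'
  have hG2 : G X ≤ G (2 * X) := h.mono_G hXm hXm' (by linarith)
  have hsep := h.separated
  have hκg : g (2 * X) ≤ κ * g (2 * X) := le_mul_of_one_le_left hg2 hκ
  set w : ℝ × ℝ → ℝ≥0∞ := fun q => ENNReal.ofReal ((√(ρ + |u| * q.2))⁻¹ * q.2 ^ b) with hw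
  have hle₁ : ENNReal.ofReal (C₁ * B) ≤ ENNReal.ofReal ((C₁ + C₂) * B) :=
    ENNReal.ofReal_le_ofReal (by nlinarith)
  have hle₂ : ENNReal.ofReal (C₂ * B) ≤ ENNReal.ofReal ((C₁ + C₂) * B) :=
    ENNReal.ofReal_le_ofReal (by nlinarith)
  by_cases hcase2 : |u| * G X ≤ 2 * ρ
  · have hall : dyadicStrip X g G ∩ {q | q.2 ≤ G (2 * X)} = dyadicStrip X g G := by
      refine inter_eq_left.2 fun q hq => ?_
      exact (hq.2.2.trans_le (h.mono_G (Ioo_subset_Icc_self hq.1) hXm' hq.1.2.le)).le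
    have := hlow X ρ u B g G J ψ ψx ψy h (G (2 * X)) (by linarith) (by
      rw [min_self]
      calc |u| * G (2 * X) ≤ |u| * (κ * G X) := by gcongr; exact h.G_doubling
        _ = κ * (|u| * G X) := by ring
        _ ≤ κ * (2 * ρ) := by gcongr
        _ = 2 * κ * ρ := by ring)
    rw [hall] at this
    exact this.trans (mul_le_mul_left hle₂ _)
  have hu : u ≠ 0 := by
    rintro rfl
    simp only [abs_zero, zero_mul, not_le] at hcase2
    linarith
  have hu0 : 0 < |u| := abs_pos.2 hu
  by_cases hcase1 : ρ ≤ κ * (|u| * g (2 * X))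
  · have hall : dyadicStrip X g G ∩ {q | 0 < q.2} = dyadicStrip X g G := by
      refine inter_eq_left.2 fun q hq => ?_
      exact (h.g_nonneg_of_mem (Ioo_subset_Icc_self hq.1)).trans_lt hq.2.1
    have := hup κ C₀ X ρ u B g G J ψ ψx ψy h 0 hu (fun x hx => by
      have hx' := Ioo_subset_Icc_self hx
      have hgx : g X ≤ g x := h.mono_g hXm hx' hx'.1
      have hρg : ρ ≤ κ * κ * (|u| * g X) := by
        calc ρ ≤ κ * (|u| * g (2 * X)) := hcase1
          _ ≤ κ * (|u| * (κ * g X)) := by gcongr; exact h.g_doubling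
          _ = _ := by ring
      have hgX : 0 < g X := by
        by_contra hneg
        have : g X = 0 := le_antisymm (not_lt.1 hneg) h.g_nonneg
        rw [this] at hρg
        simp only [mul_zero] at hρg
        linarith
      rw [max_eq_left (hgX.le.trans hgx)]
      refine ⟨hgX.trans_le hgx, ?_, hρg.trans (by gcongr)⟩
      have h1 := h.mono_g hx' hXm' hx'.2
      have h2 := h.mono_G hXm hx' hx'.1
      linarith)
    rw [hall] at this
    exact this.trans (mul_le_mul_left hle₁ _)
  push Not at hcase1 hcase2
  set P := ρ / |u| with hP
  have hP0 : 0 < P := by positivity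
  have huP : |u| * P = ρ := mul_div_cancel₀ _ hu0.ne'
  have hPG : 2 * P < G X := by
    rw [hP, ← mul_div_assoc, div_lt_iff₀ hu0]; linarith
  have hgP : κ * g (2 * X) < P := by
    rw [hP, lt_div_iff₀ hu0]; linarith
  have hlo := hlow X ρ u B g G J ψ ψx ψy h P hgP (by
    refine (mul_le_mul_of_nonneg_left (min_le_left _ _) hu0.le).trans ?_
    rw [huP]
    exact le_mul_of_one_le_left (by linarith) (by linarith))
  have hhi := hup κ C₀ X ρ u B g G J ψ ψx ψy h P hu (fun x hx => by
    have hx' := Ioo_subset_Icc_self hx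
    have h1 := h.mono_g hx' hXm' hx'.2
    have h2 := h.mono_G hXm hx' hx'.1
    rw [max_eq_right (by linarith)]
    refine ⟨hP0, by linarith, ?_⟩
    rw [huP]
    exact le_mul_of_one_le_left (by linarith) (by nlinarith))
  have hmeas : MeasurableSet {q : ℝ × ℝ | q.2 ≤ P} := measurableSet_le measurable_snd measurable_const
  have hcompl : {q : ℝ × ℝ | P < q.2} = {q : ℝ × ℝ | q.2 ≤ P}ᶜ := by
    ext q; simp
  rw [hcompl, ← sdiff_eq] at hhi
  rw [← integral_inter_add_sdiff hmeas h.integrable,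
    ← lintegral_inter_add_sdiff w (dyadicStrip X g G) hmeas, mul_add]
  exact (enorm_add_le _ _).trans (add_le_add (hlo.trans (mul_le_mul_left hle₂ _))
    (hhi.trans (mul_le_mul_left hle₁ _)))

end StripHyp

theorem hasDerivAt_rpow_mul_comp_rpow {N : ℕ} (hN : 0 < N) {s x : ℝ} {w : ℝ → ℝ} (hx : 0 < x)
    (hw : AnalyticAt ℝ w (x ^ ((N : ℝ)⁻¹))) :
    HasDerivAt (fun x => x ^ s * w (x ^ ((N : ℝ)⁻¹)))
      (x ^ (s - 1) * (s * w (x ^ ((N : ℝ)⁻¹)) +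
        x ^ ((N : ℝ)⁻¹) * deriv w (x ^ ((N : ℝ)⁻¹)) * (N : ℝ)⁻¹)) x := by
  have h1 : HasDerivAt (fun x : ℝ => x ^ s) (s * x ^ (s - 1)) x :=
    Real.hasDerivAt_rpow_const (Or.inl hx.ne')
  have h2 : HasDerivAt (fun x : ℝ => x ^ ((N : ℝ)⁻¹)) ((N : ℝ)⁻¹ * x ^ ((N : ℝ)⁻¹ - 1)) x :=
    Real.hasDerivAt_rpow_const (Or.inl hx.ne')
  have h3 := h1.mul (hw.differentiableAt.hasDerivAt.comp x h2)
  refine h3.congr_deriv ?_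
  simp only [Function.comp_apply]
  rw [Real.rpow_sub_one hx.ne', Real.rpow_sub_one hx.ne']
  field_simp

theorem tendsto_rpow_inv_nat_nhdsGT_zero {N : ℕ} (hN : 0 < N) :
    Tendsto (fun x : ℝ => x ^ ((N : ℝ)⁻¹)) (𝓝[>] 0) (𝓝 0) := by
  have hN' : (0 : ℝ) < (N : ℝ)⁻¹ := by positivity
  have h : ContinuousAt (fun x : ℝ => x ^ ((N : ℝ)⁻¹)) 0 :=
    Real.continuousAt_rpow_const _ _ (Or.inr hN'.le)
  have h2 := h.tendsto
  rw [Real.zero_rpow hN'.ne'] at h2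
  exact h2.mono_left nhdsWithin_le_nhds

/-- A function analytic in `x ^ (1/N)` is zero near `0⁺` or behaves like a power, together with its
first two derivatives. -/
theorem PuiseuxOn.eventually_zero_or_expansion {N : ℕ} (hN : 0 < N) {a : ℝ} (ha : 0 < a)
    {k : ℝ → ℝ} (hk : PuiseuxOn N a k) :
    (∀ᶠ x in 𝓝[>] (0 : ℝ), k x = 0) ∨ ∃ (s e : ℝ) (k₁ k₂ : ℝ → ℝ), e ≠ 0 ∧
      (∀ᶠ x in 𝓝[>] (0 : ℝ), HasDerivAt k (k₁ x) x ∧ HasDerivAt k₁ (k₂ x) x ∧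
        ContinuousAt k₂ x) ∧
      Tendsto (fun x => k x / x ^ s) (𝓝[>] 0) (𝓝 e) ∧
      Tendsto (fun x => k₁ x / x ^ (s - 1)) (𝓝[>] 0) (𝓝 (s * e)) ∧
      Tendsto (fun x => k₂ x / x ^ (s - 1 - 1)) (𝓝[>] 0) (𝓝 ((s - 1) * (s * e))) := by
  obtain ⟨k', I, -, hsub, han, hkk'⟩ := hk
  have ht := tendsto_rpow_inv_nat_nhdsGT_zero hN
  have h0 : AnalyticAt ℝ k' 0 := han 0 (hsub ⟨le_rfl, by positivity⟩)
  have hEq : ∀ᶠ x in 𝓝[>] (0 : ℝ), x ∈ Ioo 0 a := Ioo_mem_nhdsGT ha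
  by_cases hz : ∀ᶠ z in 𝓝 (0 : ℝ), k' z = 0
  · left
    filter_upwards [ht.eventually hz, hEq] with x hx hxa
    rw [hkk' x (Ioo_subset_Icc_self hxa), hx]
  right
  obtain ⟨n, w, hw, hw0, hkw⟩ := h0.exists_eventuallyEq_pow_smul_nonzero_iff.2 hz
  set s : ℝ := n * (N : ℝ)⁻¹ with hs
  set D : ℝ → (ℝ → ℝ) → ℝ → ℝ := fun s w z => s * w z + z * deriv w z * (N : ℝ)⁻¹ with hD
  have hDan : ∀ s w, AnalyticAt ℝ w 0 → AnalyticAt ℝ (D s w) 0 := fun s w hw =>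
    (analyticAt_const.mul hw).add ((analyticAt_id.mul hw.deriv).mul analyticAt_const)
  have hD0 : ∀ s w, D s w 0 = s * w 0 := fun s w => by simp [hD]
  have hw₁ := hDan s w hw
  have hw₂ := hDan (s - 1) _ hw₁
  have hlim : ∀ (s : ℝ) (w : ℝ → ℝ), AnalyticAt ℝ w 0 →
      Tendsto (fun x => x ^ s * w (x ^ ((N : ℝ)⁻¹)) / x ^ s) (𝓝[>] 0) (𝓝 (w 0)) := by
    intro s w hw
    refine (hw.continuousAt.tendsto.comp ht).congr' ?_
    filter_upwards [self_mem_nhdsWithin] with x hx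
    rw [mul_div_cancel_left₀ _ (Real.rpow_pos_of_pos hx s).ne']
    rfl
  have hform : ∀ᶠ x in 𝓝[>] (0 : ℝ), k x = x ^ s * w (x ^ ((N : ℝ)⁻¹)) := by
    filter_upwards [ht.eventually hkw, hEq] with x hx hxa
    rw [hkk' x (Ioo_subset_Icc_self hxa), hx, sub_zero, smul_eq_mul, ← Real.rpow_natCast,
      ← Real.rpow_mul hxa.1.le, hs, mul_comm (n : ℝ)]
  refine ⟨s, w 0, fun x => x ^ (s - 1) * D s w (x ^ ((N : ℝ)⁻¹)),
    fun x => x ^ (s - 1 - 1) * D (s - 1) (D s w) (x ^ ((N : ℝ)⁻¹)), hw0, ?_, ?_, ?_, ?_⟩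
  · obtain ⟨r, hr, hform'⟩ := mem_nhdsGT_iff_exists_Ioo_subset.1 hform
    filter_upwards [ht.eventually hw.eventually_analyticAt,
      ht.eventually hw₁.eventually_analyticAt, ht.eventually hw₂.eventually_analyticAt,
      Ioo_mem_nhdsGT hr] with x hx hx1 hx2 hxr
    refine ⟨?_, hasDerivAt_rpow_mul_comp_rpow hN hxr.1 hx1, ?_⟩
    · refine (hasDerivAt_rpow_mul_comp_rpow hN hxr.1 hx).congr_of_eventuallyEq ?_
      filter_upwards [isOpen_Ioo.mem_nhds hxr] with y hy using hform' hy
    · exact (Real.continuousAt_rpow_const _ _ (Or.inl hxr.1.ne')).mul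
        (ContinuousAt.comp (f := fun x : ℝ => x ^ ((N : ℝ)⁻¹)) hx2.continuousAt
          (Real.continuousAt_rpow_const _ _ (Or.inl hxr.1.ne')))
  · refine (hlim s w hw).congr' ?_
    filter_upwards [hform] with x hx
    rw [hx]
  · rw [← hD0]
    exact hlim (s - 1) _ hw₁
  · rw [← hD0 s w, ← hD0 (s - 1)]
    exact hlim (s - 1 - 1) _ hw₂

theorem exponent_lt_of_tendsto {f : ℝ → ℝ} {p s e : ℝ}
    (hp : Tendsto (fun x => f x / x ^ p) (𝓝[>] 0) (𝓝 0))
    (hs : Tendsto (fun x => f x / x ^ s) (𝓝[>] 0) (𝓝 e)) (he : e ≠ 0) : p < s := by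
  by_contra hsp
  push Not at hsp
  refine he (tendsto_nhds_unique hs ?_)
  have h2 : Tendsto (fun x : ℝ => x ^ (p - s)) (𝓝[>] 0) (𝓝 (0 ^ (p - s))) :=
    (Real.continuousAt_rpow_const 0 _ (Or.inr (sub_nonneg.2 hsp))).tendsto.mono_left
      nhdsWithin_le_nhds
  have h3 := hp.mul h2
  rw [zero_mul] at h3
  refine h3.congr' ?_
  filter_upwards [self_mem_nhdsWithin] with x hx
  have hx' : (0 : ℝ) < x := hx
  rw [Real.rpow_sub hx']
  have := (Real.rpow_pos_of_pos hx' p).ne'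
  have := (Real.rpow_pos_of_pos hx' s).ne'
  field_simp

theorem LeadingTerm.eventually_bounds {g : ℝ → ℝ} {h m : ℝ} (hh : 0 < h) (hg : LeadingTerm g h m) :
    ∀ᶠ x in 𝓝[>] (0 : ℝ), h / 2 * x ^ m ≤ g x ∧ g x ≤ 3 / 2 * h * x ^ m := by
  filter_upwards [hg.eventually (Icc_mem_nhds (show h / 2 < h by linarith)
    (show h < 3 / 2 * h by linarith)), self_mem_nhdsWithin] with x hx hx0
  have hxm : 0 < x ^ m := Real.rpow_pos_of_pos hx0 m
  exact ⟨(le_div_iff₀ hxm).1 hx.1, (div_le_iff₀ hxm).1 hx.2⟩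

/-- Near `0⁺` a bounding curve with a positive leading term is positive, increasing and
doubling. -/
theorem PuiseuxOn.curve_properties {N : ℕ} (hN : 0 < N) {a : ℝ} (ha : 0 < a) {g : ℝ → ℝ}
    (hg : PuiseuxOn N a g) {h m : ℝ} (hh : 0 < h) (hm : 0 < m) (hlead : LeadingTerm g h m) :
    ∃ r > 0, ContinuousOn g (Ioo 0 r) ∧ MonotoneOn g (Ioo 0 r) ∧ (∀ x ∈ Ioo 0 r, 0 < g x) ∧
      ∀ x, 0 < x → 2 * x < r → g (2 * x) ≤ 3 * 2 ^ m * g x := by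
  have hb := hlead.eventually_bounds hh
  have hpos : ∀ᶠ x in 𝓝[>] (0 : ℝ), 0 < g x := by
    filter_upwards [hb, self_mem_nhdsWithin] with x hx hx0
    have : 0 < x ^ m := Real.rpow_pos_of_pos hx0 m
    exact lt_of_lt_of_le (by positivity) hx.1
  rcases hg.eventually_zero_or_expansion hN ha with hz | ⟨s, e, g₁, g₂, he, hder, h0, h1, -⟩
  · obtain ⟨x, hx, hx'⟩ := (hz.and hpos).exists
    exact absurd hx hx'.ne'
  have he0 : 0 ≤ e := by
    refine ge_of_tendsto h0 ?_
    filter_upwards [hpos, self_mem_nhdsWithin] with x hx hx0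
    have : 0 < x ^ s := Real.rpow_pos_of_pos hx0 s
    positivity
  have hs : 0 < s := by
    refine exponent_lt_of_tendsto (f := g) (p := 0) ?_ h0 he
    have h2 : Tendsto (fun x : ℝ => x ^ m) (𝓝[>] 0) (𝓝 (0 ^ m)) :=
      (Real.continuousAt_rpow_const 0 _ (Or.inr hm.le)).tendsto.mono_left nhdsWithin_le_nhds
    have h3 := Tendsto.mul hlead h2
    rw [Real.zero_rpow hm.ne', mul_zero] at h3
    refine h3.congr' ?_
    filter_upwards [self_mem_nhdsWithin] with x hx
    rw [div_mul_cancel₀ _ (Real.rpow_pos_of_pos hx m).ne', Real.rpow_zero, div_one]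
  have hse : 0 < s * e := mul_pos hs (lt_of_le_of_ne he0 he.symm)
  have hg₁ : ∀ᶠ x in 𝓝[>] (0 : ℝ), 0 ≤ g₁ x := by
    filter_upwards [h1.eventually (lt_mem_nhds hse), self_mem_nhdsWithin] with x hx hx0
    have h4 : 0 < x ^ (s - 1) := Real.rpow_pos_of_pos hx0 _
    exact ((div_pos_iff_of_pos_right h4).1 hx).le
  obtain ⟨r, hr, hall⟩ := mem_nhdsGT_iff_exists_Ioo_subset.1
    (hb.and (hpos.and (hg₁.and hder)))
  refine ⟨r, hr, fun x hx => (hall hx).2.2.2.1.continuousAt.continuousWithinAt, ?_,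
    fun x hx => (hall hx).2.1, ?_⟩
  · refine monotoneOn_of_deriv_nonneg (convex_Ioo 0 r)
      (fun x hx => (hall hx).2.2.2.1.continuousAt.continuousWithinAt) ?_ ?_
    · intro x hx
      exact (hall (interior_subset hx)).2.2.2.1.differentiableAt.differentiableWithinAt
    · intro x hx
      rw [(hall (interior_subset hx)).2.2.2.1.deriv]
      exact (hall (interior_subset hx)).2.2.1
  · intro x hx hxr
    have b1 := (hall (show x ∈ Ioo 0 r from ⟨hx, by linarith⟩)).1.1
    have b2 := (hall (show 2 * x ∈ Ioo 0 r from ⟨by linarith, hxr⟩)).1.2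
    rw [Real.mul_rpow (by norm_num) hx.le] at b2
    have h2m : (0 : ℝ) < 2 ^ m := by positivity
    calc g (2 * x) ≤ 3 * 2 ^ m * (h / 2 * x ^ m) := by linarith
      _ ≤ 3 * 2 ^ m * g x := by gcongr

/-- A function vanishing to order greater than one at `0⁺`, of size `lam X` on `[X, 2X]`. -/
theorem PuiseuxOn.higher_order_properties {N : ℕ} (hN : 0 < N) {a : ℝ} (ha : 0 < a) {l : ℝ → ℝ}
    (hl : PuiseuxOn N a l) (hl0 : Tendsto (fun x => l x / x) (𝓝[>] 0) (𝓝 0)) :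
    ∃ (l₁ l₂ lam : ℝ → ℝ) (C₁ c₂ r : ℝ), 1 ≤ C₁ ∧ 0 < c₂ ∧ 0 < r ∧
      (∀ x ∈ Ioo 0 r, HasDerivAt l (l₁ x) x ∧ HasDerivAt l₁ (l₂ x) x ∧ ContinuousAt l₂ x ∧
        |l₁ x| ≤ 1) ∧
      ∀ X, 0 < X → 2 * X < r → 0 ≤ lam X ∧
        (∀ x ∈ Icc X (2 * X), |l x| ≤ C₁ * lam X) ∧
        (∀ x ∈ Icc X (2 * X), |l₁ x| * X ≤ C₁ * lam X) ∧
        ((∀ x ∈ Icc X (2 * X), c₂ * lam X ≤ l₂ x * X ^ 2) ∨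
          ∀ x ∈ Icc X (2 * X), c₂ * lam X ≤ -l₂ x * X ^ 2) := by
  rcases hl.eventually_zero_or_expansion hN ha with hz | ⟨s, e, l₁, l₂, he, hder, h0, h1, h2⟩
  · obtain ⟨r, hr, hall⟩ := mem_nhdsGT_iff_exists_Ioo_subset.1 hz
    refine ⟨fun _ => 0, fun _ => 0, fun _ => 0, 1, 1, r, le_rfl, one_pos, hr, fun x hx => ?_, ?_⟩
    · refine ⟨(hasDerivAt_const x (0 : ℝ)).congr_of_eventuallyEq ?_, hasDerivAt_const x _,
        continuousAt_const, by simp⟩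
      filter_upwards [isOpen_Ioo.mem_nhds hx] with y hy using hall hy
    · intro X hX hXr
      refine ⟨le_rfl, fun x hx => ?_, fun x _ => by simp, Or.inl fun x _ => by simp⟩
      have : l x = 0 := hall ⟨hX.trans_le hx.1, hx.2.trans_lt hXr⟩
      simp [this]
  have hs : 1 < s := exponent_lt_of_tendsto (by simpa using hl0) h0 he
  have hs0 : 0 < s := by linarith
  have hs1 : 0 < s - 1 := by linarith
  have he0 : 0 < |e| := abs_pos.2 he
  have b0 : ∀ᶠ x in 𝓝[>] (0 : ℝ), |l x| ≤ 2 * |e| * x ^ s := by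
    filter_upwards [h0.abs.eventually (gt_mem_nhds (show |e| < 2 * |e| by linarith)),
      self_mem_nhdsWithin] with x hx hx0
    have hp : 0 < x ^ s := Real.rpow_pos_of_pos hx0 _
    rw [abs_div, abs_of_pos hp, div_lt_iff₀ hp] at hx
    exact hx.le
  have b1 : ∀ᶠ x in 𝓝[>] (0 : ℝ), |l₁ x| ≤ 2 * s * |e| * x ^ (s - 1) := by
    have hlt : |s * e| < 2 * s * |e| := by
      rw [abs_mul, abs_of_pos hs0]; nlinarith [mul_pos hs0 he0]
    filter_upwards [h1.abs.eventually (gt_mem_nhds hlt), self_mem_nhdsWithin] with x hx hx0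
    have hp : 0 < x ^ (s - 1) := Real.rpow_pos_of_pos hx0 _
    rw [abs_div, abs_of_pos hp, div_lt_iff₀ hp] at hx
    exact hx.le
  have b1' : ∀ᶠ x in 𝓝[>] (0 : ℝ), |l₁ x| ≤ 1 := by
    have ht : Tendsto (fun x : ℝ => 2 * s * |e| * x ^ (s - 1)) (𝓝[>] 0) (𝓝 (2 * s * |e| * 0)) := by
      refine Tendsto.const_mul _ ?_
      have := (Real.continuousAt_rpow_const 0 (s - 1) (Or.inr hs1.le)).tendsto
      rw [Real.zero_rpow hs1.ne'] at this
      exact this.mono_left nhdsWithin_le_nhds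
    rw [mul_zero] at ht
    filter_upwards [b1, ht.eventually (gt_mem_nhds one_pos)] with x hx hx'
    exact hx.trans hx'.le
  have b2 : (∀ᶠ x in 𝓝[>] (0 : ℝ), (s - 1) * s * |e| / 2 * x ^ (s - 1 - 1) ≤ l₂ x) ∨
      ∀ᶠ x in 𝓝[>] (0 : ℝ), (s - 1) * s * |e| / 2 * x ^ (s - 1 - 1) ≤ -l₂ x := by
    have hq : 0 < (s - 1) * s * |e| := by positivity
    rcases lt_or_gt_of_ne he with hneg | hpos
    · right
      have hlt : (s - 1) * s * |e| / 2 < -((s - 1) * (s * e)) := by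
        rw [abs_of_neg hneg] at hq ⊢; nlinarith
      filter_upwards [h2.neg.eventually (lt_mem_nhds hlt), self_mem_nhdsWithin] with x hx hx0
      have hp : 0 < x ^ (s - 1 - 1) := Real.rpow_pos_of_pos hx0 _
      rw [← neg_div, lt_div_iff₀ hp] at hx
      exact hx.le
    · left
      have hlt : (s - 1) * s * |e| / 2 < (s - 1) * (s * e) := by
        rw [abs_of_pos hpos] at hq ⊢; nlinarith
      filter_upwards [h2.eventually (lt_mem_nhds hlt), self_mem_nhdsWithin] with x hx hx0
      have hp : 0 < x ^ (s - 1 - 1) := Real.rpow_pos_of_pos hx0 _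
      rw [lt_div_iff₀ hp] at hx
      exact hx.le
  have hpow2 : ∀ X x : ℝ, 0 < X → x ∈ Icc X (2 * X) → x ^ s ≤ 2 ^ s * X ^ s := by
    intro X x hX hx
    rw [← Real.mul_rpow (by norm_num) hX.le]
    exact Real.rpow_le_rpow (hX.le.trans hx.1) hx.2 hs0.le
  have h2s : (1 : ℝ) ≤ 2 ^ s := Real.one_le_rpow (by norm_num) hs0.le
  have hsecond : ∀ (v : ℝ) (X x : ℝ), 0 < X → x ∈ Icc X (2 * X) →
      (s - 1) * s * |e| / 2 * x ^ (s - 1 - 1) ≤ v →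
      (s - 1) * s / 8 * (|e| * X ^ s) ≤ v * X ^ 2 := by
    intro v X x hX hx hv
    have hx0 : 0 < x := hX.trans_le hx.1
    have hXx : X ^ s ≤ x ^ s := Real.rpow_le_rpow hX.le hx.1 hs0.le
    have hsq : x ^ 2 / 4 ≤ X ^ 2 := by nlinarith [hx.2]
    have hpw : x ^ (s - 1 - 1) * x ^ 2 = x ^ s := by
      rw [Real.rpow_sub_one hx0.ne', Real.rpow_sub_one hx0.ne']; field_simp
    have hp : 0 < x ^ (s - 1 - 1) := by positivity
    calc (s - 1) * s / 8 * (|e| * X ^ s) ≤ (s - 1) * s / 8 * (|e| * x ^ s) := by gcongr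
      _ = (s - 1) * s * |e| / 2 * x ^ (s - 1 - 1) * (x ^ 2 / 4) := by rw [← hpw]; ring
      _ ≤ (s - 1) * s * |e| / 2 * x ^ (s - 1 - 1) * X ^ 2 := by gcongr
      _ ≤ v * X ^ 2 := by gcongr
  have hkey : ∃ r > 0, ∀ x ∈ Ioo 0 r, (HasDerivAt l (l₁ x) x ∧ HasDerivAt l₁ (l₂ x) x ∧
      ContinuousAt l₂ x) ∧ |l x| ≤ 2 * |e| * x ^ s ∧ |l₁ x| ≤ 2 * s * |e| * x ^ (s - 1) ∧
      |l₁ x| ≤ 1 := by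
    obtain ⟨r, hr, hall⟩ := mem_nhdsGT_iff_exists_Ioo_subset.1 (hder.and (b0.and (b1.and b1')))
    exact ⟨r, hr, fun x hx => hall hx⟩
  obtain ⟨r, hr, hall⟩ := hkey
  obtain ⟨r', hr', hall'⟩ : ∃ r > 0,
      (∀ x ∈ Ioo 0 r, (s - 1) * s * |e| / 2 * x ^ (s - 1 - 1) ≤ l₂ x) ∨
      ∀ x ∈ Ioo 0 r, (s - 1) * s * |e| / 2 * x ^ (s - 1 - 1) ≤ -l₂ x := by
    rcases b2 with b2 | b2
    · obtain ⟨r, hr, hall⟩ := mem_nhdsGT_iff_exists_Ioo_subset.1 b2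
      exact ⟨r, hr, Or.inl fun x hx => hall hx⟩
    · obtain ⟨r, hr, hall⟩ := mem_nhdsGT_iff_exists_Ioo_subset.1 b2
      exact ⟨r, hr, Or.inr fun x hx => hall hx⟩
  refine ⟨l₁, l₂, fun X => |e| * X ^ s, 2 * s * 2 ^ s, (s - 1) * s / 8, min r r', ?_, by positivity,
    lt_min hr hr', fun x hx => ?_, fun X hX hXr => ⟨by positivity, fun x hx => ?_, fun x hx => ?_, ?_⟩⟩
  · nlinarith
  · obtain ⟨⟨h1, h2, h3⟩, -, -, h4⟩ := hall x ⟨hx.1, hx.2.trans_le (min_le_left _ _)⟩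
    exact ⟨h1, h2, h3, h4⟩
  · have hxr : x ∈ Ioo 0 r := ⟨hX.trans_le hx.1, hx.2.trans_lt (hXr.trans_le (min_le_left _ _))⟩
    have hX0 : 0 < X ^ s := by positivity
    calc |l x| ≤ 2 * |e| * x ^ s := (hall x hxr).2.1
      _ ≤ 2 * |e| * (2 ^ s * X ^ s) := by gcongr; exact hpow2 X x hX hx
      _ = 1 * (2 * 2 ^ s * (|e| * X ^ s)) := by ring
      _ ≤ s * (2 * 2 ^ s * (|e| * X ^ s)) := by gcongr
      _ = _ := by ring
  · have hxr : x ∈ Ioo 0 r := ⟨hX.trans_le hx.1, hx.2.trans_lt (hXr.trans_le (min_le_left _ _))⟩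
    have hx0 : 0 < x := hxr.1
    calc |l₁ x| * X ≤ 2 * s * |e| * x ^ (s - 1) * x :=
          mul_le_mul (hall x hxr).2.2.1 hx.1 hX.le (by positivity)
      _ = 2 * s * |e| * x ^ s := by rw [Real.rpow_sub_one hx0.ne']; field_simp
      _ ≤ 2 * s * |e| * (2 ^ s * X ^ s) := by gcongr; exact hpow2 X x hX hx
      _ = _ := by ring
  · have hmem : ∀ x ∈ Icc X (2 * X), x ∈ Ioo 0 r' := fun x hx =>
      ⟨hX.trans_le hx.1, hx.2.trans_lt (hXr.trans_le (min_le_right _ _))⟩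
    exact hall'.imp (fun h x hx => hsecond _ X x hX hx (h x (hmem x hx)))
      (fun h x hx => hsecond _ X x hX hx (h x (hmem x hx)))

theorem hasDerivAt_fst_slice {F : ℝ × ℝ → ℝ} {q : ℝ × ℝ} (hF : DifferentiableAt ℝ F q) :
    HasDerivAt (fun x => F (x, q.2)) (fderiv ℝ F q (1, 0)) q.1 :=
  hF.hasFDerivAt.comp_hasDerivAt q.1 ((hasDerivAt_id q.1).prodMk (hasDerivAt_const q.1 q.2))

theorem hasDerivAt_snd_slice {F : ℝ × ℝ → ℝ} {q : ℝ × ℝ} (hF : DifferentiableAt ℝ F q) :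
    HasDerivAt (fun y => F (q.1, y)) (fderiv ℝ F q (0, 1)) q.2 :=
  hF.hasFDerivAt.comp_hasDerivAt q.2 ((hasDerivAt_const q.2 q.1).prodMk (hasDerivAt_id q.2))

theorem MonomialLike.bounds {F : ℝ × ℝ → ℝ} {Ω : Set (ℝ × ℝ)} {ε d α : ℝ} {β : ℕ} (hε : ε < 1)
    (hd : d ≠ 0) (hα : 0 ≤ α) (hF : MonomialLike F Ω ε d α β) {q : ℝ × ℝ} (hq : q ∈ Ω)
    (hx : 0 < q.1) (hy : 0 < q.2) (hdiff : DifferentiableAt ℝ F q) :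
    F q ≠ 0 ∧ (1 - ε) * (|d| * q.1 ^ α * q.2 ^ (β : ℝ)) ≤ |F q| ∧
      |F q| ≤ 2 * (|d| * q.1 ^ α * q.2 ^ (β : ℝ)) ∧
      |fderiv ℝ F q (1, 0) / F q| ≤ (α + 1) / (1 - ε) / q.1 ∧
      |fderiv ℝ F q (0, 1) / F q| ≤ (β + 1) / (1 - ε) / q.2 := by
  obtain ⟨h0, h1, h2⟩ := hF q hq
  rw [(hasDerivAt_fst_slice hdiff).deriv] at h1
  rw [(hasDerivAt_snd_slice hdiff).deriv] at h2
  have hd0 : 0 < |d| := abs_pos.2 hd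
  have hxa : 0 < q.1 ^ α := by positivity
  have hyb : 0 < q.2 ^ (β : ℝ) := by positivity
  have hε' : 0 < 1 - ε := by linarith
  set z := |d| * q.1 ^ α * q.2 ^ (β : ℝ) with hz
  have hz0 : 0 < z := by positivity
  have habs : |d * q.1 ^ α * q.2 ^ (β : ℝ)| = z := by
    rw [abs_mul, abs_mul, abs_of_pos hxa, abs_of_pos hyb]
  have hεz : ε * |d| * q.1 ^ α * q.2 ^ (β : ℝ) = ε * z := by rw [hz]; ring
  rw [hεz] at h0
  have hlow : (1 - ε) * z ≤ |F q| := by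
    have := abs_sub_abs_le_abs_sub (d * q.1 ^ α * q.2 ^ (β : ℝ)) (F q)
    rw [habs, abs_sub_comm] at this
    linarith
  have hpos : 0 < |F q| := lt_of_lt_of_le (by positivity) hlow
  have hup : |F q| ≤ 2 * z := by
    have := abs_sub_abs_le_abs_sub (F q) (d * q.1 ^ α * q.2 ^ (β : ℝ))
    rw [habs] at this
    nlinarith
  refine ⟨abs_pos.1 hpos, hlow, hup, ?_, ?_⟩
  · have hx1 : q.1 ^ (α - 1) = q.1 ^ α / q.1 := Real.rpow_sub_one hx.ne' α
    have e1 : |d * α * q.1 ^ (α - 1) * q.2 ^ (β : ℝ)| = α * z / q.1 := by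
      rw [hx1, abs_mul, abs_mul, abs_mul, abs_div, abs_of_pos hxa, abs_of_pos hyb, abs_of_pos hx,
        abs_of_nonneg hα, hz]
      ring
    have e2 : ε * |d| * q.1 ^ (α - 1) * q.2 ^ (β : ℝ) = ε * z / q.1 := by rw [hx1, hz]; ring
    rw [e2] at h1
    have h3 := abs_sub_abs_le_abs_sub (fderiv ℝ F q (1, 0))
      (d * α * q.1 ^ (α - 1) * q.2 ^ (β : ℝ))
    rw [e1] at h3
    have h4 : |fderiv ℝ F q (1, 0)| ≤ (α + 1) * z / q.1 := by
      have h5 : ε * z / q.1 ≤ z / q.1 := by gcongr; nlinarith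
      calc _ ≤ α * z / q.1 + z / q.1 := by linarith
        _ = _ := by ring
    rw [abs_div, div_le_iff₀ hpos]
    calc |fderiv ℝ F q (1, 0)| ≤ (α + 1) * z / q.1 := h4
      _ = (α + 1) / (1 - ε) / q.1 * ((1 - ε) * z) := by field_simp
      _ ≤ (α + 1) / (1 - ε) / q.1 * |F q| := by gcongr
  · have hy1 : q.2 ^ ((β : ℝ) - 1) = q.2 ^ (β : ℝ) / q.2 := Real.rpow_sub_one hy.ne' _
    have hβ : (0 : ℝ) ≤ β := Nat.cast_nonneg β
    have e1 : |d * β * q.1 ^ α * q.2 ^ ((β : ℝ) - 1)| = β * z / q.2 := by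
      rw [hy1, abs_mul, abs_mul, abs_mul, abs_div, abs_of_pos hxa, abs_of_pos hyb, abs_of_pos hy,
        abs_of_nonneg hβ, hz]
      ring
    have e2 : ε * |d| * q.1 ^ α * q.2 ^ ((β : ℝ) - 1) = ε * z / q.2 := by rw [hy1, hz]; ring
    rw [e2] at h2
    have h3 := abs_sub_abs_le_abs_sub (fderiv ℝ F q (0, 1))
      (d * β * q.1 ^ α * q.2 ^ ((β : ℝ) - 1))
    rw [e1] at h3
    have h4 : |fderiv ℝ F q (0, 1)| ≤ (β + 1) * z / q.2 := by
      have h5 : ε * z / q.2 ≤ z / q.2 := by gcongr; nlinarith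
      calc _ ≤ β * z / q.2 + z / q.2 := by linarith
        _ = _ := by ring
    rw [abs_div, div_le_iff₀ hpos]
    calc |fderiv ℝ F q (0, 1)| ≤ (β + 1) * z / q.2 := h4
      _ = (β + 1) / (1 - ε) / q.2 * ((1 - ε) * z) := by field_simp
      _ ≤ (β + 1) / (1 - ε) / q.2 * |F q| := by gcongr

/-- A product of powers of functions comparable to monomials is comparable to a (generalized)
monomial, with logarithmic derivatives of size `1/x` and `1/y`. -/
theorem prod_abs_rpow_monomial_bounds {n : ℕ} (γ : Fin n → ℝ) {F : Fin n → ℝ × ℝ → ℝ}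
    {Ω : Set (ℝ × ℝ)} (hΩ : IsOpen Ω) (hpos : ∀ q ∈ Ω, 0 < q.1 ∧ 0 < q.2)
    (hF : ∀ i, ContDiffOn ℝ 1 (F i) Ω) {ε : ℝ} (hε : ε < 1)
    (hmono : ∀ i, ∃ (d α : ℝ) (β : ℕ), d ≠ 0 ∧ 0 ≤ α ∧ MonomialLike (F i) Ω ε d α β) :
    ContDiffOn ℝ 1 (fun q => ∏ i, |F i q| ^ γ i) Ω ∧ ∃ a b C : ℝ, 0 < C ∧ ∀ q ∈ Ω,
      0 < ∏ i, |F i q| ^ γ i ∧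
      ∏ i, |F i q| ^ γ i ≤ C * (q.1 ^ a * q.2 ^ b) ∧
      q.1 ^ a * q.2 ^ b ≤ C * ∏ i, |F i q| ^ γ i ∧
      |fderiv ℝ (fun q => ∏ i, |F i q| ^ γ i) q (1, 0)| ≤ C * (∏ i, |F i q| ^ γ i) / q.1 ∧
      |fderiv ℝ (fun q => ∏ i, |F i q| ^ γ i) q (0, 1)| ≤ C * (∏ i, |F i q| ^ γ i) / q.2 := by
  choose d α β hd hα hm using hmono
  have hε' : 0 < 1 - ε := by linarith
  have hdiff : ∀ i, ∀ q ∈ Ω, DifferentiableAt ℝ (F i) q := fun i q hq =>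
    ((hF i).contDiffAt (hΩ.mem_nhds hq)).differentiableAt one_ne_zero
  have hb := fun i q (hq : q ∈ Ω) =>
    (hm i).bounds hε (hd i) (hα i) hq (hpos q hq).1 (hpos q hq).2 (hdiff i q hq)
  have hexp : ∀ q ∈ Ω, ∏ i, |F i q| ^ γ i = Real.exp (∑ i, γ i * Real.log (F i q)) := by
    intro q hq
    rw [Real.exp_sum]
    refine Finset.prod_congr rfl fun i _ => ?_
    rw [Real.rpow_def_of_pos (abs_pos.2 (hb i q hq).1), Real.log_abs, mul_comm]
  have hcd : ContDiffOn ℝ 1 (fun q => ∏ i, |F i q| ^ γ i) Ω := by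
    refine ContDiffOn.congr ?_ hexp
    refine ContDiffOn.exp (ContDiffOn.sum fun i _ => ?_)
    exact contDiffOn_const.mul ((hF i).log fun q hq => (hb i q hq).1)
  have hder : ∀ q ∈ Ω, ∀ v, fderiv ℝ (fun q => ∏ i, |F i q| ^ γ i) q v =
      (∏ i, |F i q| ^ γ i) * ∑ i, γ i * (fderiv ℝ (F i) q v / F i q) := by
    intro q hq v
    have h1 : HasFDerivAt (fun q => Real.exp (∑ i, γ i * Real.log (F i q)))
        (Real.exp (∑ i, γ i * Real.log (F i q)) •
          ∑ i, γ i • ((F i q)⁻¹ • fderiv ℝ (F i) q)) q :=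
      (HasFDerivAt.fun_sum fun i _ =>
        (((hdiff i q hq).hasFDerivAt.log (hb i q hq).1).const_mul (γ i))).exp
    have h2 := h1.congr_of_eventuallyEq (f₁ := fun q => ∏ i, |F i q| ^ γ i)
      (by filter_upwards [hΩ.mem_nhds hq] with p hp using hexp p hp)
    rw [h2.fderiv, hexp q hq]
    simp only [smul_apply, sum_apply, smul_eq_mul]
    congr 1
    refine Finset.sum_congr rfl fun i _ => ?_
    rw [inv_mul_eq_div]
  set K : ℝ := max 2 (1 - ε)⁻¹ with hK
  have hK2 : 2 ≤ K := le_max_left _ _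
  have hK1 : 1 ≤ K := by linarith
  have hK0 : 0 < K := by linarith
  have hKε : (1 - ε)⁻¹ ≤ K := le_max_right _ _
  set a := ∑ i, α i * γ i with ha
  set b := ∑ i, (β i : ℝ) * γ i with hbdef
  have hd0 : ∀ i, 0 < |d i| := fun i => abs_pos.2 (hd i)
  set C₁ := ∏ i, K ^ |γ i| * |d i| ^ γ i with hC₁
  set C₂ := ∏ i, K ^ |γ i| * (|d i| ^ γ i)⁻¹ with hC₂
  set C₃ := ∑ i, |γ i| * ((α i + 1) / (1 - ε)) with hC₃
  set C₄ := ∑ i, |γ i| * ((β i + 1) / (1 - ε)) with hC₄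
  have hC₁0 : 0 < C₁ := Finset.prod_pos fun i _ => by have := hd0 i; positivity
  have hC₂0 : 0 < C₂ := Finset.prod_pos fun i _ => by have := hd0 i; positivity
  have hC₃0 : 0 ≤ C₃ := Finset.sum_nonneg fun i _ => by have := hα i; positivity
  have hC₄0 : 0 ≤ C₄ := Finset.sum_nonneg fun i _ => by positivity
  refine ⟨hcd, a, b, C₁ + C₂ + C₃ + C₄, by positivity, fun q hq => ?_⟩
  obtain ⟨hx, hy⟩ := hpos q hq
  have hΦ : 0 < ∏ i, |F i q| ^ γ i := by rw [hexp q hq]; exact Real.exp_pos _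
  have hmon : ∏ i, (q.1 ^ (α i * γ i) * q.2 ^ ((β i : ℝ) * γ i)) = q.1 ^ a * q.2 ^ b := by
    rw [Finset.prod_mul_distrib, ha, hbdef, Real.rpow_sum_of_pos hx, Real.rpow_sum_of_pos hy]
  have hxy : 0 < q.1 ^ a * q.2 ^ b := by positivity
  have hz : ∀ i, (|d i| * q.1 ^ α i * q.2 ^ (β i : ℝ)) ^ γ i =
      |d i| ^ γ i * (q.1 ^ (α i * γ i) * q.2 ^ ((β i : ℝ) * γ i)) := by
    intro i
    have := hd0 i
    rw [Real.mul_rpow (by positivity) (by positivity), Real.mul_rpow (by positivity) (by positivity),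
      ← Real.rpow_mul hx.le, ← Real.rpow_mul hy.le]
    ring
  have hrange : ∀ i, |d i| * q.1 ^ α i * q.2 ^ (β i : ℝ) / K ≤ |F i q| ∧
      |F i q| ≤ K * (|d i| * q.1 ^ α i * q.2 ^ (β i : ℝ)) := by
    intro i
    have h1 := (hb i q hq).2.1
    have h2 := (hb i q hq).2.2.1
    have := hd0 i
    have hz0 : 0 < |d i| * q.1 ^ α i * q.2 ^ (β i : ℝ) := by positivity
    refine ⟨le_trans ?_ h1, h2.trans (by gcongr)⟩
    rw [div_eq_mul_inv, mul_comm]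
    gcongr
    rw [inv_le_comm₀ hK0 hε']
    exact hKε
  have hsumbound : ∀ (v : ℝ × ℝ) (c : Fin n → ℝ) (t : ℝ),
      (∀ i, |fderiv ℝ (F i) q v / F i q| ≤ c i / t) →
      |fderiv ℝ (fun q => ∏ i, |F i q| ^ γ i) q v| ≤
        (∑ i, |γ i| * c i) * (∏ i, |F i q| ^ γ i) / t := by
    intro v c t hc
    rw [hder q hq v, abs_mul, abs_of_pos hΦ, mul_comm, mul_div_right_comm]
    gcongr
    refine (Finset.abs_sum_le_sum_abs _ _).trans ?_
    rw [Finset.sum_div]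
    refine Finset.sum_le_sum fun i _ => ?_
    rw [abs_mul, mul_div_assoc]
    exact mul_le_mul_of_nonneg_left (hc i) (abs_nonneg _)
  refine ⟨hΦ, ?_, ?_, ?_, ?_⟩
  · calc ∏ i, |F i q| ^ γ i
        ≤ ∏ i, (K ^ |γ i| * |d i| ^ γ i) * (q.1 ^ (α i * γ i) * q.2 ^ ((β i : ℝ) * γ i)) := by
          refine Finset.prod_le_prod (fun i _ => by positivity) fun i _ => ?_
          have := hd0 i
          rw [mul_assoc, ← hz i]
          exact rpow_le_rpow_abs_mul _ hK1 (by positivity) (hrange i).1 (hrange i).2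
      _ = C₁ * (q.1 ^ a * q.2 ^ b) := by rw [Finset.prod_mul_distrib, hmon]
      _ ≤ _ := by gcongr; linarith
  · calc q.1 ^ a * q.2 ^ b
        = ∏ i, (|d i| ^ γ i)⁻¹ * (|d i| * q.1 ^ α i * q.2 ^ (β i : ℝ)) ^ γ i := by
          rw [← hmon]
          refine Finset.prod_congr rfl fun i _ => ?_
          have := hd0 i
          rw [hz i, inv_mul_cancel_left₀ (by positivity)]
      _ ≤ ∏ i, (K ^ |γ i| * (|d i| ^ γ i)⁻¹) * |F i q| ^ γ i := by
          refine Finset.prod_le_prod (fun i _ => by have := hd0 i; positivity) fun i _ => ?_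
          have := hd0 i
          rw [show K ^ |γ i| * (|d i| ^ γ i)⁻¹ * |F i q| ^ γ i =
            (|d i| ^ γ i)⁻¹ * (K ^ |γ i| * |F i q| ^ γ i) by ring]
          refine mul_le_mul_of_nonneg_left ?_ (by positivity)
          refine rpow_le_rpow_abs_mul _ hK1 (abs_pos.2 (hb i q hq).1) ?_ ?_
          · rw [div_le_iff₀ hK0, mul_comm]; exact (hrange i).2
          · have := (div_le_iff₀ hK0).1 (hrange i).1
            linarith
      _ = C₂ * ∏ i, |F i q| ^ γ i := by rw [Finset.prod_mul_distrib]
      _ ≤ _ := by gcongr; linarith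
  · refine (hsumbound (1, 0) _ q.1 fun i => (hb i q hq).2.2.2.1).trans ?_
    gcongr
    rw [← hC₃]; linarith
  · refine (hsumbound (0, 1) _ q.2 fun i => (hb i q hq).2.2.2.2).trans ?_
    gcongr
    rw [← hC₄]; linarith

/-- Summation of estimates over dyadic strips. -/
theorem enorm_setIntegral_sliver_le_of_dyadicStrip {r : ℝ} (hr : 0 < r) {g G : ℝ → ℝ}
    (hD : MeasurableSet (sliverSet r g G)) {f : ℝ × ℝ → ℂ} {w : ℝ × ℝ → ℝ≥0∞} {K : ℝ≥0∞}
    (hf : IntegrableOn f (sliverSet r g G))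
    (h : ∀ X, 0 < X → 2 * X ≤ r →
      ‖∫ q in dyadicStrip X g G, f q‖ₑ ≤ K * ∫⁻ q in dyadicStrip X g G, w q) :
    ‖∫ q in sliverSet r g G, f q‖ₑ ≤ K * ∫⁻ q in sliverSet r g G, w q := by
  set s : ℕ → Set (ℝ × ℝ) := fun j => dyadicStrip (r * (1 / 2) ^ (j + 1)) g G with hs
  have h2 : ∀ j : ℕ, 2 * (r * (1 / 2) ^ (j + 1)) = r * (1 / 2 : ℝ) ^ j := fun j => by
    rw [pow_succ]; ring
  have hX : ∀ j : ℕ, 0 < r * (1 / 2 : ℝ) ^ j := fun j => by positivity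
  have hXr : ∀ j : ℕ, r * (1 / 2 : ℝ) ^ j ≤ r := fun j =>
    mul_le_of_le_one_right hr.le (pow_le_one₀ (by norm_num) (by norm_num))
  have hmem : ∀ j q, q ∈ s j ↔ q ∈ sliverSet r g G ∧
      q.1 ∈ Ioo (r * (1 / 2 : ℝ) ^ (j + 1)) (r * (1 / 2 : ℝ) ^ j) := by
    intro j q
    simp only [hs, dyadicStrip, sliverSet, mem_ofPred_eq, h2, mem_Ioo]
    constructor
    · rintro ⟨⟨h1, h2⟩, h3, h4⟩
      exact ⟨⟨(hX _).trans h1, h2.trans_le (hXr j), h3, h4⟩, h1, h2⟩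
    · rintro ⟨⟨-, -, h3, h4⟩, h1, h2⟩
      exact ⟨⟨h1, h2⟩, h3, h4⟩
  have hmeas : ∀ j, MeasurableSet (s j) := fun j => by
    have : s j = sliverSet r g G ∩
        Prod.fst ⁻¹' Ioo (r * (1 / 2 : ℝ) ^ (j + 1)) (r * (1 / 2 : ℝ) ^ j) := by
      ext q; exact hmem j q
    rw [this]
    exact hD.inter (measurable_fst measurableSet_Ioo)
  have hdisj : Pairwise (Function.onFun Disjoint s) := by
    have key : ∀ i j, i < j → Disjoint (s i) (s j) := by
      intro i j hij
      refine Set.disjoint_left.2 fun q hqi hqj => ?_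
      have h1 := ((hmem i q).1 hqi).2.1
      have h3 := ((hmem j q).1 hqj).2.2
      have h4 : (1 / 2 : ℝ) ^ j ≤ (1 / 2 : ℝ) ^ (i + 1) :=
        pow_le_pow_of_le_one (by norm_num) (by norm_num) hij
      nlinarith
    intro i j hij
    rcases lt_or_gt_of_ne hij with hlt | hlt
    · exact key i j hlt
    · exact (key j i hlt).symm
  have hsub : ⋃ j, s j ⊆ sliverSet r g G := iUnion_subset fun j q hq => ((hmem j q).1 hq).1
  have hnull : volume (Prod.fst ⁻¹' (range fun j : ℕ => r * (1 / 2 : ℝ) ^ j) : Set (ℝ × ℝ)) = 0 :=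
    Measure.quasiMeasurePreserving_fst.preimage_null
      ((countable_range _).measure_zero volume)
  have hae : (⋃ j, s j : Set (ℝ × ℝ)) =ᵐ[volume] sliverSet r g G := by
    refine hsub.eventuallyLE.antisymm ?_
    have hcompl := compl_mem_ae_iff.2 hnull
    filter_upwards [hcompl] with q hq hqD
    have hqD' : q ∈ sliverSet r g G := hqD
    obtain ⟨j, hj1, hj2⟩ := exists_nat_pow_near_of_lt_one (x := q.1 / r) (y := (1 / 2 : ℝ))
      (div_pos hqD'.1 hr) ((div_le_one hr).2 hqD'.2.1.le) (by norm_num) (by norm_num)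
    rw [lt_div_iff₀ hr] at hj1
    rw [div_le_iff₀ hr] at hj2
    have hne : q.1 ≠ r * (1 / 2 : ℝ) ^ j := fun he => hq ⟨j, he.symm⟩
    exact mem_iUnion.2 ⟨j, (hmem j q).2 ⟨hqD', by linarith,
      lt_of_le_of_ne (by linarith) hne⟩⟩
  rw [← setIntegral_congr_set hae, ← setLIntegral_congr hae,
    ← (hasSum_integral_iUnion hmeas hdisj (hf.mono_set hsub)).tsum_eq,
    lintegral_iUnion hmeas hdisj, ← ENNReal.tsum_mul_left]
  refine enorm_tsum_le_tsum_enorm.trans (ENNReal.tsum_le_tsum fun j => ?_)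
  exact h _ (hX (j + 1)) ((h2 j).le.trans (hXr j))

theorem measurePreserving_shear {k : ℝ → ℝ} (hk : Measurable k) :
    MeasurePreserving (shear k) volume volume := by
  rw [Measure.volume_eq_prod]
  refine (MeasurePreserving.id volume).skew_product (g := fun x y => y + k x) ?_ ?_
  · exact measurable_snd.add (hk.comp measurable_fst)
  · exact Eventually.of_forall fun x => (measurePreserving_add_right volume (k x)).map_eq

theorem measurableEmbedding_shear {k : ℝ → ℝ} (hk : Measurable k) :
    MeasurableEmbedding (shear k) := by
  refine (measurePreserving_shear hk).measurable.measurableEmbedding fun p q h => ?_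
  have h1 : p.1 = q.1 := (Prod.ext_iff.1 h).1
  have h2 : p.2 + k p.1 = q.2 + k q.1 := (Prod.ext_iff.1 h).2
  rw [h1] at h2
  exact Prod.ext h1 (add_right_cancel h2)

theorem abs_fst_le_nrm2 (p : ℝ × ℝ) : |p.1| ≤ nrm2 p :=
  Real.abs_le_sqrt (by linarith [sq_nonneg p.2])

theorem abs_snd_le_nrm2 (p : ℝ × ℝ) : |p.2| ≤ nrm2 p :=
  Real.abs_le_sqrt (by linarith [sq_nonneg p.1])

theorem nrm2_le_abs_add_abs (p : ℝ × ℝ) : nrm2 p ≤ |p.1| + |p.2| :=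
  Real.sqrt_le_iff.2 ⟨by positivity, by
    nlinarith [sq_abs p.1, sq_abs p.2, mul_nonneg (abs_nonneg p.1) (abs_nonneg p.2)]⟩

theorem hasFDerivAt_shear {k : ℝ → ℝ} {k₁ : ℝ} {q : ℝ × ℝ} (hk : HasDerivAt k k₁ q.1) :
    HasFDerivAt (shear k) ((ContinuousLinearMap.fst ℝ ℝ ℝ).prod
      (ContinuousLinearMap.snd ℝ ℝ ℝ + k₁ • ContinuousLinearMap.fst ℝ ℝ ℝ)) q :=
  hasFDerivAt_fst.prodMk (hasFDerivAt_snd.add (hk.comp_hasFDerivAt q hasFDerivAt_fst))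

theorem AlphaBound.differentiableAt {α : ℝ × ℝ → ℝ} {A : ℝ} (hα : AlphaBound α A) {p : ℝ × ℝ}
    (hp : p ≠ 0) : DifferentiableAt ℝ α p :=
  (hα.1.contDiffAt (isOpen_compl_singleton.mem_nhds hp)).differentiableAt one_ne_zero

theorem AlphaBound.comp_shear_bounds {α : ℝ × ℝ → ℝ} {A : ℝ} (hA : 0 ≤ A) (hα : AlphaBound α A)
    {k : ℝ → ℝ} {k₁ : ℝ} {q : ℝ × ℝ} (hq : 0 < q.1) (hk : HasDerivAt k k₁ q.1) :
    DifferentiableAt ℝ (fun q => α (shear k q)) q ∧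
      |fderiv ℝ (fun q => α (shear k q)) q (1, 0)| ≤ A * (1 + |k₁|) / q.1 ∧
      |fderiv ℝ (fun q => α (shear k q)) q (0, 1)| ≤ A / q.1 := by
  have hp : shear k q ≠ 0 := fun h => hq.ne' (Prod.ext_iff.1 h).1
  have hcomp := (hα.differentiableAt hp).hasFDerivAt.comp q (hasFDerivAt_shear hk)
  have hgrad := hα.2.2 _ hp
  set D := fderiv ℝ α (shear k q) with hD
  have hinv : A * (nrm2 (shear k q))⁻¹ ≤ A / q.1 := by
    rw [div_eq_mul_inv]
    gcongr
    exact (le_abs_self q.1).trans (abs_fst_le_nrm2 (shear k q))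
  have h1 : |D (1, 0)| ≤ A / q.1 := (abs_fst_le_nrm2 _).trans (hgrad.trans hinv)
  have h2 : |D (0, 1)| ≤ A / q.1 := (abs_snd_le_nrm2 _).trans (hgrad.trans hinv)
  have hfd : fderiv ℝ (fun q => α (shear k q)) q = D.comp ((ContinuousLinearMap.fst ℝ ℝ ℝ).prod
      (ContinuousLinearMap.snd ℝ ℝ ℝ + k₁ • ContinuousLinearMap.fst ℝ ℝ ℝ)) := hcomp.fderiv
  refine ⟨hcomp.differentiableAt, ?_, ?_⟩
  · have e : fderiv ℝ (fun q => α (shear k q)) q (1, 0) = D (1, 0) + k₁ * D (0, 1) := by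
      rw [hfd]
      have : ((1 : ℝ), k₁) = (1, 0) + k₁ • ((0 : ℝ), (1 : ℝ)) := by simp
      simp only [ContinuousLinearMap.comp_apply, ContinuousLinearMap.prod_apply, add_apply,
        smul_apply, ContinuousLinearMap.coe_fst', ContinuousLinearMap.coe_snd', smul_eq_mul,
        mul_one, zero_add]
      rw [this, map_add, map_smul, smul_eq_mul]
    rw [e]
    calc |D (1, 0) + k₁ * D (0, 1)| ≤ |D (1, 0)| + |k₁| * |D (0, 1)| := by
          rw [← abs_mul]; exact abs_add_le _ _
      _ ≤ A / q.1 + |k₁| * (A / q.1) := by gcongr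
      _ = _ := by ring
  · have e : fderiv ℝ (fun q => α (shear k q)) q (0, 1) = D (0, 1) := by
      rw [hfd]
      simp
    rw [e]
    exact h2

/-- Lower bound for the decay weight on a dyadic strip. -/
theorem inv_sqrt_le_decayWeight_shear {c t u b C₁ lam X y x : ℝ} {k : ℝ → ℝ} (hb : 0 ≤ b)
    (hC₁ : 0 ≤ C₁) (hlam : 0 ≤ lam) (hX : 0 < X) (hXx : X ≤ x) (hx2 : x ≤ 2 * X) (hy : 0 < y)
    (hS : |y + k x| ≤ b * x) (hl : |k x - c * x| ≤ C₁ * lam) :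
    (√(1 + |t + c * u| * X + |u| * lam + |u| * y))⁻¹ ≤
      √(2 * (1 + b) + C₁) * decayWeight (unitDir c) t u (shear k (x, y)) := by
  have hs1 : 1 ≤ √(1 + c ^ 2) := Real.one_le_sqrt.2 (by nlinarith)
  have hs0 : 0 < √(1 + c ^ 2) := by linarith
  have hsinv : (√(1 + c ^ 2))⁻¹ ≤ 1 := inv_le_one_of_one_le₀ hs1
  have hd1 : |dot2 (t, u) (unitDir c)| ≤ |t + c * u| := by
    have : dot2 (t, u) (unitDir c) = (√(1 + c ^ 2))⁻¹ * (t + c * u) := by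
      simp only [dot2, unitDir, Prod.smul_mk, smul_eq_mul]; ring
    rw [this, abs_mul, abs_of_pos (inv_pos.2 hs0)]
    exact mul_le_of_le_one_left (abs_nonneg _) hsinv
  have hd2 : |dot2 (shear k (x, y)) (perp2 (unitDir c))| ≤ y + C₁ * lam := by
    have : dot2 (shear k (x, y)) (perp2 (unitDir c)) =
        (√(1 + c ^ 2))⁻¹ * (-(y + (k x - c * x))) := by
      simp only [dot2, unitDir, perp2, shear, Prod.smul_mk, smul_eq_mul]; ring
    rw [this, abs_mul, abs_of_pos (inv_pos.2 hs0), abs_neg]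
    refine (mul_le_of_le_one_left (abs_nonneg _) hsinv).trans ((abs_add_le _ _).trans ?_)
    rw [abs_of_pos hy]
    linarith
  have hx0 : 0 < x := hX.trans_le hXx
  have hn : nrm2 (shear k (x, y)) ≤ 2 * (1 + b) * X := by
    refine (nrm2_le_abs_add_abs _).trans ?_
    simp only [shear]
    rw [abs_of_pos hx0]
    nlinarith
  have hn0 : 0 ≤ nrm2 (shear k (x, y)) := Real.sqrt_nonneg _
  set R := 1 + |t + c * u| * X + |u| * lam + |u| * y with hR
  set R' := 1 + |dot2 (t, u) (unitDir c)| * nrm2 (shear k (x, y)) +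
    |u| * |dot2 (shear k (x, y)) (perp2 (unitDir c))| with hR'
  have hT : 0 ≤ |t + c * u| * X := by positivity
  have hul : 0 ≤ |u| * lam := by positivity
  have huy : 0 ≤ |u| * y := by positivity
  have hR0 : 0 < R := by positivity
  have hR'0 : 0 < R' := by positivity
  have hle : R' ≤ (2 * (1 + b) + C₁) * R := by
    have e1 : |dot2 (t, u) (unitDir c)| * nrm2 (shear k (x, y)) ≤
        2 * (1 + b) * (|t + c * u| * X) := by
      calc _ ≤ |t + c * u| * (2 * (1 + b) * X) := by gcongr
        _ = _ := by ring
    have e2 : |u| * |dot2 (shear k (x, y)) (perp2 (unitDir c))| ≤ |u| * y + C₁ * (|u| * lam) := by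
      calc _ ≤ |u| * (y + C₁ * lam) := by gcongr
        _ = _ := by ring
    rw [hR, hR']
    nlinarith [mul_nonneg hb hT, mul_nonneg hb hul, mul_nonneg hb huy, mul_nonneg hC₁ hT,
      mul_nonneg hC₁ hul, mul_nonneg hC₁ huy]
  have hdw : decayWeight (unitDir c) t u (shear k (x, y)) = (√R')⁻¹ := by
    rw [decayWeight, Real.rpow_neg hR'0.le, ← Real.sqrt_eq_rpow]
  rw [hdw, ← div_eq_mul_inv, le_div_iff₀ (Real.sqrt_pos.2 hR'0),
    inv_mul_le_iff₀ (Real.sqrt_pos.2 hR0), mul_comm, ← Real.sqrt_mul (by positivity)]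
  exact Real.sqrt_le_sqrt hle

/-- Geometry of a sliver near the origin: its bounding curves are continuous, increasing, doubling
and well separated. -/
theorem exists_sliver_geometry {N : ℕ} (hN : 0 < N) {a : ℝ} (ha : 0 < a) {g G : ℝ → ℝ}
    (hg : PuiseuxOn N a g) (hG : PuiseuxOn N a G) {H M : ℝ} (hH : 0 < H) (hM : 1 ≤ M)
    (hGlead : LeadingTerm G H M)
    (hglead : (∀ x ∈ Ioo (0 : ℝ) a, g x = 0) ∨
      ∃ h m : ℝ, 0 < h ∧ M < m ∧ LeadingTerm g h m) :
    ∃ κ CG r : ℝ, 1 ≤ κ ∧ 0 < CG ∧ 0 < r ∧ ContinuousOn g (Ioo 0 r) ∧ ContinuousOn G (Ioo 0 r) ∧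
      MonotoneOn g (Ioo 0 r) ∧ MonotoneOn G (Ioo 0 r) ∧
      (∀ x ∈ Ioo 0 r, 0 ≤ g x ∧ 0 < G x ∧ G x ≤ CG * x) ∧
      ∀ x, 0 < x → 2 * x < r → g (2 * x) ≤ κ * g x ∧ G (2 * x) ≤ κ * G x ∧
        2 * κ * g (2 * x) < G x := by
  obtain ⟨r₁, hr₁, hGc, hGm, hGpos, hGd⟩ := hG.curve_properties hN ha hH (by linarith) hGlead
  obtain ⟨r₂, hr₂, hGb⟩ := mem_nhdsGT_iff_exists_Ioo_subset.1 (hGlead.eventually_bounds hH)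
  have hGb' : ∀ x ∈ Ioo 0 r₂, H / 2 * x ^ M ≤ G x ∧ G x ≤ 3 / 2 * H * x ^ M := fun x hx => hGb hx
  have hGlin : ∀ x ∈ Ioo 0 (min r₂ 1), G x ≤ 3 / 2 * H * x := fun x hx => by
    refine (hGb' x ⟨hx.1, hx.2.trans_le (min_le_left _ _)⟩).2.trans ?_
    gcongr
    have := Real.rpow_le_rpow_of_exponent_ge hx.1 (hx.2.trans_le (min_le_right _ _)).le hM
    rwa [Real.rpow_one] at this
  have h2M : (1 : ℝ) ≤ 2 ^ M := Real.one_le_rpow (by norm_num) (by linarith)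
  have hcoe : ∀ {x R R' : ℝ}, x ∈ Ioo 0 R → R ≤ R' → x ∈ Ioo 0 R' := fun hx h =>
    ⟨hx.1, hx.2.trans_le h⟩
  rcases hglead with hz | ⟨h, m, hh, hMm, hlead⟩
  · set r := min a (min r₁ (min r₂ 1)) with hr
    have hra : r ≤ a := min_le_left _ _
    have hrr₁ : r ≤ r₁ := (min_le_right _ _).trans (min_le_left _ _)
    have hrr₂ : r ≤ min r₂ 1 := (min_le_right _ _).trans (min_le_right _ _)
    have hz' : ∀ x ∈ Ioo 0 r, g x = 0 := fun x hx => hz x (hcoe hx hra)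
    refine ⟨3 * 2 ^ M, 3 / 2 * H, r, by linarith, by positivity,
      lt_min ha (lt_min hr₁ (lt_min hr₂ one_pos)), ?_, hGc.mono (Ioo_subset_Ioo_right hrr₁), ?_,
      hGm.mono (Ioo_subset_Ioo_right hrr₁), ?_, ?_⟩
    · exact continuousOn_const.congr hz'
    · intro x hx y hy _
      rw [hz' x hx, hz' y hy]
    · intro x hx
      exact ⟨(hz' x hx).ge, hGpos x (hcoe hx hrr₁), hGlin x (hcoe hx hrr₂)⟩
    · intro x hx hxr
      rw [hz' (2 * x) ⟨by linarith, hxr⟩, hz' x ⟨hx, by linarith⟩]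
      refine ⟨by simp, hGd x hx (hxr.trans_le hrr₁), ?_⟩
      rw [mul_zero]
      exact hGpos x ⟨hx, by linarith⟩
  · have hm0 : 0 < m := by linarith
    obtain ⟨r₃, hr₃, hgc, hgm, hgpos, hgd⟩ := hg.curve_properties hN ha hh hm0 hlead
    set κ : ℝ := 3 * 2 ^ m with hκ
    have h2m : (2 : ℝ) ^ M ≤ 2 ^ m := Real.rpow_le_rpow_of_exponent_le (by norm_num) hMm.le
    have hκ0 : 0 < κ := by positivity
    have hsmall : ∀ᶠ x in 𝓝[>] (0 : ℝ), 2 * κ * (3 / 2 * h * 2 ^ m) * x ^ (m - M) < H / 2 := by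
      have ht : Tendsto (fun x : ℝ => 2 * κ * (3 / 2 * h * 2 ^ m) * x ^ (m - M)) (𝓝[>] 0)
          (𝓝 (2 * κ * (3 / 2 * h * 2 ^ m) * 0)) := by
        refine Tendsto.const_mul _ ?_
        have := (Real.continuousAt_rpow_const 0 (m - M) (Or.inr (by linarith))).tendsto
        rw [Real.zero_rpow (by linarith)] at this
        exact this.mono_left nhdsWithin_le_nhds
      rw [mul_zero] at ht
      exact ht.eventually (gt_mem_nhds (by positivity))
    obtain ⟨r₄, hr₄, hgb⟩ := mem_nhdsGT_iff_exists_Ioo_subset.1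
      ((hlead.eventually_bounds hh).and hsmall)
    set r := min r₃ (min r₄ (min r₁ (min r₂ 1))) with hr
    have hrr₃ : r ≤ r₃ := min_le_left _ _
    have hrr₄ : r ≤ r₄ := (min_le_right _ _).trans (min_le_left _ _)
    have hrr₁ : r ≤ r₁ := (min_le_right _ _).trans ((min_le_right _ _).trans (min_le_left _ _))
    have hrr₂ : r ≤ min r₂ 1 :=
      (min_le_right _ _).trans ((min_le_right _ _).trans (min_le_right _ _))
    refine ⟨κ, 3 / 2 * H, r, by linarith, by positivity,
      lt_min hr₃ (lt_min hr₄ (lt_min hr₁ (lt_min hr₂ one_pos))),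
      hgc.mono (Ioo_subset_Ioo_right hrr₃), hGc.mono (Ioo_subset_Ioo_right hrr₁),
      hgm.mono (Ioo_subset_Ioo_right hrr₃), hGm.mono (Ioo_subset_Ioo_right hrr₁), ?_, ?_⟩
    · intro x hx
      exact ⟨(hgpos x (hcoe hx hrr₃)).le, hGpos x (hcoe hx hrr₁), hGlin x (hcoe hx hrr₂)⟩
    · intro x hx hxr
      have hx1 : x ∈ Ioo 0 r := ⟨hx, by linarith⟩
      refine ⟨hgd x hx (hxr.trans_le hrr₃), (hGd x hx (hxr.trans_le hrr₁)).trans ?_, ?_⟩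
      · have := hGpos x (hcoe hx1 hrr₁)
        rw [hκ]
        gcongr
      · have hx2 : 2 * x ∈ Ioo 0 r := ⟨by linarith, hxr⟩
        have b1 := (hgb (hcoe hx2 hrr₄)).1.2
        have b2 : 2 * κ * (3 / 2 * h * 2 ^ m) * x ^ (m - M) < H / 2 := (hgb (hcoe hx1 hrr₄)).2
        have b3 := (hGb' x (hcoe hx1 (hrr₂.trans (min_le_left _ _)))).1
        have hxM : 0 < x ^ M := by positivity
        have hxm : x ^ m = x ^ (m - M) * x ^ M := by
          rw [← Real.rpow_add hx]; congr 1; ring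
        rw [Real.mul_rpow (by norm_num) hx.le] at b1
        calc 2 * κ * g (2 * x) ≤ 2 * κ * (3 / 2 * h * (2 ^ m * x ^ m)) := by gcongr
          _ = 2 * κ * (3 / 2 * h * 2 ^ m) * x ^ (m - M) * x ^ M := by rw [hxm]; ring
          _ < H / 2 * x ^ M := by gcongr
          _ ≤ G x := b3

theorem isOpen_sliverSet {r : ℝ} {g G : ℝ → ℝ} (hg : ContinuousOn g (Ioo 0 r))
    (hG : ContinuousOn G (Ioo 0 r)) : IsOpen (sliverSet r g G) := by
  have hV : IsOpen (Prod.fst ⁻¹' Ioo 0 r : Set (ℝ × ℝ)) := isOpen_Ioo.preimage continuous_fst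
  have hmaps : MapsTo Prod.fst (Prod.fst ⁻¹' Ioo 0 r : Set (ℝ × ℝ)) (Ioo 0 r) := fun q hq => hq
  have h1 := (continuousOn_snd.sub (hg.comp continuousOn_fst hmaps)).isOpen_inter_preimage hV
    (isOpen_Ioi (a := (0 : ℝ)))
  have h2 := ((hG.comp continuousOn_fst hmaps).sub continuousOn_snd).isOpen_inter_preimage hV
    (isOpen_Ioi (a := (0 : ℝ)))
  convert h1.inter h2 using 1
  ext q
  simp only [sliverSet, mem_ofPred_eq, mem_inter_iff, mem_preimage, mem_Ioo, mem_Ioi,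
    Function.comp_apply, Pi.sub_apply, sub_pos]
  tauto

theorem contDiffOn_one_of_hasDerivAt {k k₁ : ℝ → ℝ} {s : Set ℝ} (hs : IsOpen s)
    (hk : ∀ x ∈ s, HasDerivAt k (k₁ x) x) (hk₁ : ContinuousOn k₁ s) : ContDiffOn ℝ 1 k s := by
  rw [show (1 : WithTop ℕ∞) = 0 + 1 by simp, contDiffOn_succ_iff_deriv_of_isOpen hs]
  refine ⟨fun x hx => (hk x hx).differentiableAt.differentiableWithinAt, by simp, ?_⟩
  rw [contDiffOn_zero]
  exact hk₁.congr fun x hx => (hk x hx).deriv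

theorem contDiffOn_shear {k : ℝ → ℝ} {r : ℝ} {Ω : Set (ℝ × ℝ)} (hk : ContDiffOn ℝ 1 k (Ioo 0 r))
    (hΩ : ∀ q ∈ Ω, q.1 ∈ Ioo 0 r) : ContDiffOn ℝ 1 (shear k) Ω :=
  contDiffOn_fst.prodMk (contDiffOn_snd.add (hk.comp contDiffOn_fst hΩ))

theorem sliverSet_mono {r r' : ℝ} (h : r ≤ r') (g G : ℝ → ℝ) :
    sliverSet r g G ⊆ sliverSet r' g G :=
  fun _ hq => ⟨hq.1, hq.2.1.trans_le h, hq.2.2⟩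

theorem dyadicStrip_subset_sliverSet {X r : ℝ} (hX : 0 ≤ X) (hr : 2 * X ≤ r) (g G : ℝ → ℝ) :
    dyadicStrip X g G ⊆ sliverSet r g G :=
  fun _ hq => ⟨hX.trans_lt hq.1.1, hq.1.2.trans_le hr, hq.2⟩

/-- Near the origin, the sliver estimate in the coordinates in which the amplitude is comparable to
a monomial. -/
theorem enorm_setIntegral_sliver_phase_le {r κ CG C₁ c₂ c bS a b CΦ : ℝ}
    {g G k l₁ l₂ lam : ℝ → ℝ} {Φ : ℝ × ℝ → ℝ} (hκ : 1 ≤ κ) (hCG : 0 < CG) (hC₁ : 1 ≤ C₁)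
    (hc₂ : 0 < c₂) (hbS : 0 ≤ bS) (hCΦ : 0 < CΦ)
    (hgc : ContinuousOn g (Ioo 0 r)) (hGc : ContinuousOn G (Ioo 0 r))
    (hgm : MonotoneOn g (Ioo 0 r)) (hGm : MonotoneOn G (Ioo 0 r))
    (hcurve : ∀ x ∈ Ioo 0 r, 0 ≤ g x ∧ 0 < G x ∧ G x ≤ CG * x)
    (hdouble : ∀ x, 0 < x → 2 * x < r → g (2 * x) ≤ κ * g x ∧ G (2 * x) ≤ κ * G x ∧
      2 * κ * g (2 * x) < G x)
    (hl : ∀ x ∈ Ioo 0 r, HasDerivAt (fun x => k x - c * x) (l₁ x) x ∧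
      HasDerivAt l₁ (l₂ x) x ∧ ContinuousAt l₂ x ∧ |l₁ x| ≤ 1)
    (hlam : ∀ X, 0 < X → 2 * X < r → 0 ≤ lam X ∧
      (∀ x ∈ Icc X (2 * X), |k x - c * x| ≤ C₁ * lam X) ∧
      (∀ x ∈ Icc X (2 * X), |l₁ x| * X ≤ C₁ * lam X) ∧
      ((∀ x ∈ Icc X (2 * X), c₂ * lam X ≤ l₂ x * X ^ 2) ∨
        ∀ x ∈ Icc X (2 * X), c₂ * lam X ≤ -l₂ x * X ^ 2))
    (hS : ∀ q ∈ sliverSet r g G, |q.2 + k q.1| ≤ bS * q.1)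
    (hΦc : ContDiffOn ℝ 1 Φ (sliverSet r g G))
    (hΦ : ∀ q ∈ sliverSet r g G, 0 < Φ q ∧ Φ q ≤ CΦ * (q.1 ^ a * q.2 ^ b) ∧
      q.1 ^ a * q.2 ^ b ≤ CΦ * Φ q ∧ |fderiv ℝ Φ q (1, 0)| ≤ CΦ * Φ q / q.1 ∧
      |fderiv ℝ Φ q (0, 1)| ≤ CΦ * Φ q / q.2)
    (hΦi : IntegrableOn Φ (sliverSet r g G)) (A : ℝ) :
    ∃ C > 0, ∀ α : ℝ × ℝ → ℝ, AlphaBound α A → ∀ t u r', 0 < r' → r' < r →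
      IntegrableOn (phaseIntegrand (fun q => α (shear k q) * Φ q)
        (fun x => (t + c * u) * x + u * (k x - c * x)) u) (sliverSet r' g G) ∧
      ‖∫ q in sliverSet r' g G, phaseIntegrand (fun q => α (shear k q) * Φ q)
        (fun x => (t + c * u) * x + u * (k x - c * x)) u q‖ₑ ≤
        ENNReal.ofReal C * ∫⁻ q in sliverSet r' g G,
          ENNReal.ofReal (decayWeight (unitDir c) t u (shear k q) * Φ q) := by
  rcases lt_or_ge A 0 with hA | hA
  · exact ⟨1, one_pos, fun α hα => absurd ((abs_nonneg _).trans (hα.2.1 0)) (not_le.2 hA)⟩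
  obtain ⟨C₀, hC₀, hosc⟩ := norm_integral_exp_linear_add_le hC₁ hc₂
  obtain ⟨Cs, hCs, hstrip⟩ := StripHyp.enorm_integral_le b hκ hC₀
  set C₅ := 2 + |c| + CG + CΦ with hC₅
  have hC₅0 : 0 < C₅ := by positivity
  set B₀ := A * C₅ * CΦ * 2 ^ |a| with hB₀
  have hB₀0 : 0 ≤ B₀ := by positivity
  set Kw := √(2 * (1 + bS) + C₁) with hKw
  have hKw0 : 0 ≤ Kw := Real.sqrt_nonneg _
  refine ⟨Cs * B₀ * (2 ^ |a| * CΦ) * Kw + 1, by positivity, ?_⟩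
  intro α hα t u r' hr' hr'r
  have hopen : IsOpen (sliverSet r g G) := isOpen_sliverSet hgc hGc
  have hopen' : IsOpen (sliverSet r' g G) :=
    isOpen_sliverSet (hgc.mono (Ioo_subset_Ioo_right hr'r.le))
      (hGc.mono (Ioo_subset_Ioo_right hr'r.le))
  have hsub : sliverSet r' g G ⊆ sliverSet r g G := sliverSet_mono hr'r.le g G
  have hmemx : ∀ q ∈ sliverSet r g G, q.1 ∈ Ioo 0 r := fun q hq => ⟨hq.1, hq.2.1⟩
  have hposy : ∀ q ∈ sliverSet r g G, 0 < q.2 := fun q hq =>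
    (hcurve _ (hmemx q hq)).1.trans_lt hq.2.2.1
  have hkd : ∀ x ∈ Ioo 0 r, HasDerivAt k (l₁ x + c) x := fun x hx => by
    have := (hl x hx).1.add ((hasDerivAt_id x).const_mul c)
    simpa [Pi.add_def] using this
  have hkc : ContDiffOn ℝ 1 k (Ioo 0 r) := contDiffOn_one_of_hasDerivAt isOpen_Ioo hkd
    fun x hx => ((hl x hx).2.1.continuousAt.add continuousAt_const).continuousWithinAt
  set ψ : ℝ × ℝ → ℝ := fun q => α (shear k q) * Φ q with hψ
  set J : ℝ → ℝ := fun x => (t + c * u) * x + u * (k x - c * x) with hJ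
  have hJc : ContinuousOn J (Ioo 0 r) :=
    (continuousOn_const.mul continuousOn_id).add
      (continuousOn_const.mul (hkc.continuousOn.sub (continuousOn_const.mul continuousOn_id)))
  have hψc : ContDiffOn ℝ 1 ψ (sliverSet r g G) := by
    refine (hα.1.comp (contDiffOn_shear hkc hmemx) fun q hq h => ?_).mul hΦc
    exact hq.1.ne' (Prod.ext_iff.1 h).1
  have hψd : ∀ q ∈ sliverSet r g G, DifferentiableAt ℝ ψ q := fun q hq =>
    (hψc.contDiffAt (hopen.mem_nhds hq)).differentiableAt one_ne_zero
  have hψb : ∀ q ∈ sliverSet r g G, |ψ q| ≤ A * Φ q ∧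
      |fderiv ℝ ψ q (1, 0)| ≤ A * C₅ * Φ q / q.1 ∧
      |fderiv ℝ ψ q (0, 1)| ≤ A * C₅ * Φ q / q.2 := by
    intro q hq
    obtain ⟨h1, h2, h3⟩ := hα.comp_shear_bounds hA hq.1 (hkd q.1 (hmemx q hq))
    obtain ⟨hΦ0, -, -, hΦx, hΦy⟩ := hΦ q hq
    have hx := hq.1
    have hy := hposy q hq
    have hαb : |α (shear k q)| ≤ A := hα.2.1 _
    have hΦd : DifferentiableAt ℝ Φ q :=
      (hΦc.contDiffAt (hopen.mem_nhds hq)).differentiableAt one_ne_zero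
    have hfd : ∀ v, fderiv ℝ ψ q v = α (shear k q) * fderiv ℝ Φ q v +
        Φ q * fderiv ℝ (fun q => α (shear k q)) q v := fun v => by
      rw [hψ, fderiv_fun_mul h1 hΦd]
      simp [smul_eq_mul]
    have hgen : ∀ v X₁ X₂, |fderiv ℝ (fun q => α (shear k q)) q v| ≤ X₁ →
        |fderiv ℝ Φ q v| ≤ X₂ → |fderiv ℝ ψ q v| ≤ A * X₂ + Φ q * X₁ := by
      intro v X₁ X₂ e1 e2
      rw [hfd v]
      refine (abs_add_le _ _).trans ?_
      rw [abs_mul, abs_mul, abs_of_pos hΦ0]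
      gcongr
    refine ⟨?_, ?_, ?_⟩
    · rw [hψ, abs_mul, abs_of_pos hΦ0]
      gcongr
    · refine (hgen _ _ _ h2 hΦx).trans ?_
      have hk₁ : 1 + |l₁ q.1 + c| ≤ 2 + |c| := by
        linarith [abs_add_le (l₁ q.1) c, (hl q.1 (hmemx q hq)).2.2.2]
      calc A * (CΦ * Φ q / q.1) + Φ q * (A * (1 + |l₁ q.1 + c|) / q.1)
          = A * (CΦ + (1 + |l₁ q.1 + c|)) * Φ q / q.1 := by ring
        _ ≤ A * C₅ * Φ q / q.1 := by gcongr; linarith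
    · refine (hgen _ _ _ h3 hΦy).trans ?_
      have hyx : A / q.1 ≤ A * CG / q.2 := by
        rw [div_le_div_iff₀ hx hy, mul_assoc]
        gcongr
        exact hq.2.2.2.le.trans (hcurve _ (hmemx q hq)).2.2
      calc A * (CΦ * Φ q / q.2) + Φ q * (A / q.1)
          ≤ A * (CΦ * Φ q / q.2) + Φ q * (A * CG / q.2) := by gcongr
        _ = A * (CΦ + CG) * Φ q / q.2 := by ring
        _ ≤ A * C₅ * Φ q / q.2 := by gcongr; linarith [abs_nonneg c]
  have hint : IntegrableOn (phaseIntegrand ψ J u) (sliverSet r g G) := by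
    refine Integrable.mono' (hΦi.const_mul A) ?_ ?_
    · refine ContinuousOn.aestronglyMeasurable ?_ hopen.measurableSet
      refine (Complex.continuous_ofReal.comp_continuousOn hψc.continuousOn).mul
        (ContinuousOn.cexp ((Complex.continuous_ofReal.comp_continuousOn ?_).mul
          continuousOn_const))
      exact (hJc.comp continuousOn_fst hmemx).add (continuousOn_const.mul continuousOn_snd)
    · refine (ae_restrict_iff' hopen.measurableSet).2 (Eventually.of_forall fun q hq => ?_)
      rw [phaseIntegrand, norm_mul, Complex.norm_exp_ofReal_mul_I, mul_one, Complex.norm_real,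
        Real.norm_eq_abs]
      exact (hψb q hq).1
  refine ⟨hint.mono_set hsub, ?_⟩
  refine enorm_setIntegral_sliver_le_of_dyadicStrip hr' hopen'.measurableSet (hint.mono_set hsub) ?_
  intro X hX hXr'
  have hXr : 2 * X < r := hXr'.trans_lt hr'r
  have hstripsub : dyadicStrip X g G ⊆ sliverSet r g G :=
    dyadicStrip_subset_sliverSet hX.le hXr.le g G
  have hIcc : Icc X (2 * X) ⊆ Ioo 0 r := fun x hx => ⟨hX.trans_le hx.1, hx.2.trans_lt hXr⟩
  have hXm : X ∈ Ioo 0 r := ⟨hX, by linarith⟩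
  obtain ⟨hlam0, hlamb, hlamx, hlamxx⟩ := hlam X hX hXr
  have hstripopen : IsOpen (dyadicStrip X g G) := by
    have : dyadicStrip X g G = sliverSet r g G ∩ Prod.fst ⁻¹' Ioo X (2 * X) :=
      Subset.antisymm (fun q hq => ⟨hstripsub hq, hq.1⟩) fun q hq => ⟨hq.2, hq.1.2.2⟩
    rw [this]
    exact hopen.inter (isOpen_Ioo.preimage continuous_fst)
  have hXa : ∀ x, x ∈ Ioo X (2 * X) → x ^ a ≤ 2 ^ |a| * X ^ a ∧ X ^ a ≤ 2 ^ |a| * x ^ a := by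
    intro x hx
    have hx0 : 0 < x := hX.trans hx.1
    exact ⟨rpow_le_rpow_abs_mul a one_le_two hX (by linarith [hx.1]) hx.2.le,
      rpow_le_rpow_abs_mul a one_le_two hx0 (by linarith [hx.2]) (by linarith [hx.1])⟩
  have hΦX : ∀ q ∈ dyadicStrip X g G, A * C₅ * Φ q ≤ B₀ * X ^ a * q.2 ^ b := by
    intro q hq
    have hy := hposy q (hstripsub hq)
    calc A * C₅ * Φ q ≤ A * C₅ * (CΦ * (q.1 ^ a * q.2 ^ b)) := by
          gcongr; exact (hΦ q (hstripsub hq)).2.1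
      _ ≤ A * C₅ * (CΦ * (2 ^ |a| * X ^ a * q.2 ^ b)) := by gcongr; exact (hXa q.1 hq.1).1
      _ = _ := by rw [hB₀]; ring
  set ρ := 1 + |t + c * u| * X + |u| * lam X with hρ
  have hρ1 : 1 ≤ ρ := by
    have : 0 ≤ |t + c * u| * X := by positivity
    have : 0 ≤ |u| * lam X := by positivity
    linarith
  have hfdc := hψc.continuousOn_fderiv_of_isOpen hopen le_rfl
  have hyp : StripHyp b κ C₀ X ρ u (B₀ * X ^ a) g G J ψ (fun q => fderiv ℝ ψ q (1, 0))
      (fun q => fderiv ℝ ψ q (0, 1)) :=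
    { X_pos := hX
      one_le_ρ := hρ1
      B_nonneg := by positivity
      mono_g := hgm.mono hIcc
      mono_G := hGm.mono hIcc
      g_nonneg := (hcurve X hXm).1
      g_doubling := (hdouble X hX hXr).1
      G_doubling := (hdouble X hX hXr).2.1
      G_pos := (hcurve X hXm).2.1
      separated := (hdouble X hX hXr).2.2
      isOpen := hstripopen
      J_cont := hJc.mono hIcc
      osc := fun x₁ x₂ h1 h12 h2 => by
        rw [le_div_iff₀ (Real.sqrt_pos.2 (by linarith))]
        exact hosc X (lam X) (t + c * u) u (fun x => k x - c * x) l₁ l₂ hX hlam0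
          (fun x hx => (hl x (hIcc hx)).1) (fun x hx => (hl x (hIcc hx)).2.1)
          (fun x hx => (hl x (hIcc hx)).2.2.1.continuousWithinAt) hlamx hlamxx x₁ x₂ h1 h12 h2
      hasDeriv_x := fun q hq => hasDerivAt_fst_slice (hψd q (hstripsub hq))
      hasDeriv_y := fun q hq => hasDerivAt_snd_slice (hψd q (hstripsub hq))
      cont_x := (hfdc.mono hstripsub).clm_apply continuousOn_const
      cont_y := (hfdc.mono hstripsub).clm_apply continuousOn_const
      bound := fun q hq => by
        refine (hψb q (hstripsub hq)).1.trans (le_trans ?_ (hΦX q hq))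
        have := (hΦ q (hstripsub hq)).1
        gcongr
        exact le_mul_of_one_le_right hA (by linarith [abs_nonneg c])
      bound_x := fun q hq => by
        have hy := hposy q (hstripsub hq)
        refine (hψb q (hstripsub hq)).2.1.trans ?_
        exact div_le_div₀ (by positivity) (hΦX q hq) hX hq.1.1.le
      bound_y := fun q hq => by
        have hy := hposy q (hstripsub hq)
        refine (hψb q (hstripsub hq)).2.2.trans ?_
        rw [Real.rpow_sub_one hy.ne', ← mul_div_assoc]
        exact div_le_div_of_nonneg_right (hΦX q hq) hy.le
      integrable := hint.mono_set hstripsub }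
  refine (hstrip X ρ u _ g G J ψ _ _ hyp).trans ?_
  rw [← lintegral_const_mul' _ _ ENNReal.ofReal_ne_top,
    ← lintegral_const_mul' _ _ ENNReal.ofReal_ne_top]
  refine setLIntegral_mono' hstripopen.measurableSet fun q hq => ?_
  rw [← ENNReal.ofReal_mul (by positivity), ← ENNReal.ofReal_mul (by positivity)]
  refine ENNReal.ofReal_le_ofReal ?_
  have hqr := hstripsub hq
  have hy := hposy q hqr
  have hΦq := hΦ q hqr
  have hΦ0 := hΦq.1
  have hw := inv_sqrt_le_decayWeight_shear (c := c) (t := t) (u := u) hbS (by linarith : 0 ≤ C₁)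
    hlam0 hX hq.1.1.le hq.1.2.le hy (hS q hqr) (hlamb q.1 (Ioo_subset_Icc_self hq.1))
  have hdw : 0 ≤ decayWeight (unitDir c) t u (shear k q) :=
    Real.rpow_nonneg (by have := Real.sqrt_nonneg ((shear k q).1 ^ 2 + (shear k q).2 ^ 2)
                         rw [nrm2]; positivity) _
  have hXy : X ^ a * q.2 ^ b ≤ 2 ^ |a| * CΦ * Φ q := by
    calc X ^ a * q.2 ^ b ≤ 2 ^ |a| * q.1 ^ a * q.2 ^ b := by gcongr; exact (hXa q.1 hq.1).2
      _ = 2 ^ |a| * (q.1 ^ a * q.2 ^ b) := by ring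
      _ ≤ 2 ^ |a| * (CΦ * Φ q) := 
          mul_le_mul_of_nonneg_left hΦq.2.2.1 (by positivity)
      _ = _ := by ring
  calc Cs * (B₀ * X ^ a) * ((√(ρ + |u| * q.2))⁻¹ * q.2 ^ b)
      = Cs * B₀ * ((√(ρ + |u| * q.2))⁻¹ * (X ^ a * q.2 ^ b)) := by ring
    _ ≤ Cs * B₀ * (Kw * decayWeight (unitDir c) t u (shear k q) * (2 ^ |a| * CΦ * Φ q)) := by
        gcongr
    _ = Cs * B₀ * (2 ^ |a| * CΦ) * Kw * (decayWeight (unitDir c) t u (shear k q) * Φ q) := by ring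
    _ ≤ _ := by
        gcongr
        linarith

theorem oscIntegrand_shear (h : ℝ × ℝ → ℝ) (k : ℝ → ℝ) (c t u : ℝ) (q : ℝ × ℝ) :
    oscIntegrand h t u (shear k q) = phaseIntegrand (fun q => h (shear k q))
      (fun x => (t + c * u) * x + u * (k x - c * x)) u q := by
  simp only [oscIntegrand, phaseIntegrand, shear]
  congr 2
  push_cast
  ring

theorem PuiseuxOn.sub_const_mul {N : ℕ} (hN : 0 < N) {a : ℝ} {k : ℝ → ℝ} (hk : PuiseuxOn N a k)
    (c : ℝ) : PuiseuxOn N a fun x => k x - c * x := by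
  obtain ⟨k', I, hI, hsub, han, heq⟩ := hk
  refine ⟨fun z => k' z - c * z ^ N, I, hI, hsub, fun z hz => (han z hz).sub
    (analyticAt_const.mul (analyticAt_id.pow N)), fun x hx => ?_⟩
  simp only
  rw [heq x hx, Real.rpow_inv_natCast_pow hx.1 hN.ne']

theorem exists_shear_sliverSet_subset {a b : ℝ} {g G k : ℝ → ℝ} (hb : 0 < b)
    (hS : shear k '' sliverSet a g G ⊆ {p : ℝ × ℝ | |p.2| < b * |p.1|}) {U : Set (ℝ × ℝ)}
    (hU : U ∈ 𝓝 (0 : ℝ × ℝ)) :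
    ∃ r > 0, ∀ q ∈ sliverSet a g G, q.1 < r → shear k q ∈ U := by
  obtain ⟨δ, hδ, hball⟩ := Metric.mem_nhds_iff.1 hU
  refine ⟨δ / (1 + b), by positivity, fun q hq hqr => hball ?_⟩
  have h2 : |(shear k q).2| < b * |(shear k q).1| := hS ⟨q, hq, rfl⟩
  have h1 : |(shear k q).1| = q.1 := abs_of_pos hq.1
  rw [lt_div_iff₀ (by positivity)] at hqr
  have hx := hq.1
  rw [h1] at h2
  rw [mem_ball_zero_iff, Prod.norm_def, max_lt_iff, Real.norm_eq_abs, Real.norm_eq_abs, h1]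
  constructor <;> nlinarith

/-- Fourier estimate on a sliver `S = η(D)`. The integral on the right has a nonnegative
integrand and is taken in `[0,∞]`: integrability of `χ_E ∏ |fᵢ|^γᵢ` is assumed near the origin
only, so for a sliver reaching far from the origin that integral may be `∞`. -/
theorem sliver_fourier_estimate {n : ℕ} (f : Fin n → ℝ × ℝ → ℝ) (γ : Fin n → ℝ)
    (E : Set (ℝ × ℝ))
    (hfa : ∃ U ∈ 𝓝 (0 : ℝ × ℝ), ∀ i, AnalyticOnNhd ℝ (f i) U)
    (hfnz : ∀ i, ¬ (∀ᶠ p in 𝓝 (0 : ℝ × ℝ), f i p = 0))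
    (hinteg : ∃ U ∈ 𝓝 (0 : ℝ × ℝ), IntegrableOn (stdFun n f γ E) U)
    (hEbdry : ∃ (F : ℝ × ℝ → ℝ) (U : Set (ℝ × ℝ)), U ∈ 𝓝 (0 : ℝ × ℝ) ∧
      AnalyticOnNhd ℝ F U ∧ ¬ (∀ᶠ p in 𝓝 (0 : ℝ × ℝ), F p = 0) ∧
      ∀ p ∈ U ∩ frontier E, F p = 0)
    (N : ℕ) (hN : 0 < N) (a : ℝ) (ha : 0 < a) (g₀ G₀ : ℝ → ℝ)
    (hg₀ : PuiseuxOn N a g₀) (hG₀ : PuiseuxOn N a G₀)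
    (H M : ℝ) (hH : 0 < H) (hM : 1 ≤ M) (hG₀lead : LeadingTerm G₀ H M)
    (hg₀lead : (∀ x ∈ Ioo (0 : ℝ) a, g₀ x = 0) ∨
      ∃ h m : ℝ, 0 < h ∧ M < m ∧ LeadingTerm g₀ h m)
    (k : ℝ → ℝ) (hk : PuiseuxOn N a k) (c : ℝ)
    (hl : Tendsto (fun x => (k x - c * x) / x) (𝓝[>] (0 : ℝ)) (𝓝 0))
    (b : ℝ) (hb : 0 < b)
    (hS : shear k '' sliverSet a g₀ G₀ ⊆ {p : ℝ × ℝ | |p.2| < b * |p.1|})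
    (η' : ℝ) (hη' : η' < 1)
    (hmono : ∀ i : Fin n, ∃ (d α : ℝ) (β : ℕ), d ≠ 0 ∧ 0 ≤ α ∧
      MonomialLike (f i ∘ shear k) (sliverSet a g₀ G₀) η' d α β)
    (hconst : (∀ q ∈ sliverSet a g₀ G₀, shear k q ∈ E) ∨
      (∀ q ∈ sliverSet a g₀ G₀, shear k q ∉ E)) :
    ∃ r₁ > (0 : ℝ), ∀ A : ℝ, ∃ C > (0 : ℝ), ∀ α : ℝ × ℝ → ℝ,
      AlphaBound α A → tsupport α ⊆ disk2 r₁ → ∀ t u : ℝ,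
        IntegrableOn (oscIntegrand (fun p => α p * stdFun n f γ E p) t u)
          (shear k '' sliverSet a g₀ G₀) ∧
        ENNReal.ofReal ‖∫ p in shear k '' sliverSet a g₀ G₀,
            oscIntegrand (fun p => α p * stdFun n f γ E p) t u p‖ ≤
          ENNReal.ofReal C * ∫⁻ p in shear k '' sliverSet a g₀ G₀,
            ENNReal.ofReal (decayWeight (unitDir c) t u p * stdFun n f γ E p) := by
  obtain ⟨U₁, hU₁, hfan⟩ := hfa
  obtain ⟨U₂, hU₂, hint⟩ := hinteg
  obtain ⟨κ, CG, r₁, hκ, hCG, hr₁, hgc, hGc, hgm, hGm, hcurve, hdouble⟩ :=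
    exists_sliver_geometry hN ha hg₀ hG₀ hH hM hG₀lead hg₀lead
  obtain ⟨l₁, l₂, lam, C₁, c₂, r₂, hC₁, hc₂, hr₂, hld, hlam⟩ :=
    (hk.sub_const_mul hN c).higher_order_properties hN ha hl
  obtain ⟨r₃, hr₃, hU⟩ := exists_shear_sliverSet_subset hb hS (inter_mem hU₁ hU₂)
  set r := min (min r₁ r₂) (min r₃ a) with hr
  have hr0 : 0 < r := lt_min (lt_min hr₁ hr₂) (lt_min hr₃ ha)
  have hrr₁ : r ≤ r₁ := (min_le_left _ _).trans (min_le_left _ _)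
  have hrr₂ : r ≤ r₂ := (min_le_left _ _).trans (min_le_right _ _)
  have hrr₃ : r ≤ r₃ := (min_le_right _ _).trans (min_le_left _ _)
  have hra : r ≤ a := (min_le_right _ _).trans (min_le_right _ _)
  have hI₁ : Ioo 0 r ⊆ Ioo 0 r₁ := Ioo_subset_Ioo_right hrr₁
  have hI₂ : Ioo 0 r ⊆ Ioo 0 r₂ := Ioo_subset_Ioo_right hrr₂
  set D := sliverSet r g₀ G₀ with hD
  have hDa : D ⊆ sliverSet a g₀ G₀ := sliverSet_mono hra g₀ G₀
  have hDopen : IsOpen D := isOpen_sliverSet (hgc.mono hI₁) (hGc.mono hI₁)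
  have hDU : ∀ q ∈ D, shear k q ∈ U₁ ∩ U₂ := fun q hq =>
    hU q (hDa hq) (hq.2.1.trans_le hrr₃)
  have hDpos : ∀ q ∈ D, 0 < q.1 ∧ 0 < q.2 := fun q hq =>
    ⟨hq.1, (hcurve q.1 (hI₁ ⟨hq.1, hq.2.1⟩)).1.trans_lt hq.2.2.1⟩
  have hkd : ∀ x ∈ Ioo 0 r, HasDerivAt k (l₁ x + c) x := fun x hx => by
    have := (hld x (hI₂ hx)).1.add ((hasDerivAt_id x).const_mul c)
    simpa [Pi.add_def] using this
  have hkc : ContDiffOn ℝ 1 k (Ioo 0 r) := contDiffOn_one_of_hasDerivAt isOpen_Ioo hkd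
    fun x hx => ((hld x (hI₂ hx)).2.1.continuousAt.add continuousAt_const).continuousWithinAt
  set k' : ℝ → ℝ := (Ioo 0 r).piecewise k 0 with hk'
  have hk'm : Measurable k' :=
    hkc.continuousOn.measurable_piecewise continuousOn_const measurableSet_Ioo
  have hshear : ∀ q ∈ D, shear k' q = shear k q := fun q hq => by
    have : k' q.1 = k q.1 := piecewise_eq_of_mem _ _ _ ⟨hq.1, hq.2.1⟩
    simp only [shear, this]
  have hmp := measurePreserving_shear hk'm
  have hme := measurableEmbedding_shear hk'm
  set D' := sliverSet (r / 2) g₀ G₀ with hD'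
  have hr2 : r / 2 < r := by linarith
  have hD'D : D' ⊆ D := sliverSet_mono hr2.le g₀ G₀
  have hD'm : MeasurableSet D' := (isOpen_sliverSet
    (hgc.mono (Ioo_subset_Ioo_right (hr2.le.trans hrr₁)))
    (hGc.mono (Ioo_subset_Ioo_right (hr2.le.trans hrr₁)))).measurableSet
  have himage : shear k '' D' = shear k' '' D' :=
    image_congr fun q hq => (hshear q (hD'D hq)).symm
  set V : Set (ℝ × ℝ) := {p | p.1 < r / 2} with hV
  have hVm : MeasurableSet V := measurableSet_lt measurable_fst measurable_const
  have hSV : shear k '' sliverSet a g₀ G₀ ∩ V = shear k' '' D' := by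
    rw [← himage]
    ext p
    constructor
    · rintro ⟨⟨q, hq, rfl⟩, hqV⟩
      exact ⟨q, ⟨hq.1, hqV, hq.2.2⟩, rfl⟩
    · rintro ⟨q, hq, rfl⟩
      exact ⟨⟨q, hDa (hD'D hq), rfl⟩, hq.2.1⟩
  have hind : ∀ α : ℝ × ℝ → ℝ, tsupport α ⊆ disk2 (r / 2) → ∀ t u,
      oscIntegrand (fun p => α p * stdFun n f γ E p) t u =
        V.indicator (oscIntegrand (fun p => α p * stdFun n f γ E p) t u) := by
    intro α hα t u
    refine (indicator_eq_self.2 fun p hp => ?_).symm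
    by_contra hpV
    have hpV' : r / 2 ≤ p.1 := not_lt.1 hpV
    refine hp ?_
    have : α p = 0 := image_eq_zero_of_notMem_tsupport fun hmem => by
      have hlt : p.1 ^ 2 + p.2 ^ 2 < (r / 2) ^ 2 := hα hmem
      nlinarith [sq_nonneg p.2]
    simp [oscIntegrand, this]
  have hintegral : ∀ α : ℝ × ℝ → ℝ, tsupport α ⊆ disk2 (r / 2) → ∀ t u,
      (IntegrableOn (oscIntegrand (fun p => α p * stdFun n f γ E p) t u)
        (shear k '' sliverSet a g₀ G₀) ↔
        IntegrableOn (fun q => oscIntegrand (fun p => α p * stdFun n f γ E p) t u (shear k' q))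
          D') ∧
      ∫ p in shear k '' sliverSet a g₀ G₀, oscIntegrand (fun p => α p * stdFun n f γ E p) t u p =
        ∫ q in D', oscIntegrand (fun p => α p * stdFun n f γ E p) t u (shear k' q) := by
    intro α hα t u
    rw [hind α hα t u, integrableOn_indicator_iff hVm, setIntegral_indicator hVm, inter_comm V, hSV,
      ← hind α hα t u]
    exact ⟨hmp.integrableOn_image hme, hmp.setIntegral_image_emb hme _ _⟩
  refine ⟨r / 2, by positivity, fun A => ?_⟩
  rcases hconst with hE | hE
  swap
  · refine ⟨1, one_pos, fun α _ hα t u => ?_⟩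
    have hzero : EqOn
        (fun q => oscIntegrand (fun p => α p * stdFun n f γ E p) t u (shear k' q))
        (fun _ => 0) D' := fun q hq => by
      have : stdFun n f γ E (shear k' q) = 0 := by
        rw [hshear q (hD'D hq)]
        exact indicator_of_notMem (hE q (hDa (hD'D hq))) _
      simp [oscIntegrand, this]
    rw [(hintegral α hα t u).1, (hintegral α hα t u).2, setIntegral_congr_fun hD'm hzero]
    refine ⟨(integrableOn_congr_fun hzero hD'm).2 integrableOn_zero, by simp⟩
  set Φ : ℝ × ℝ → ℝ := fun q => ∏ i, |(f i ∘ shear k) q| ^ γ i with hΦ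
  have hstd : ∀ q ∈ D, stdFun n f γ E (shear k' q) = Φ q := fun q hq => by
    rw [hshear q hq]
    exact indicator_of_mem (hE q (hDa hq)) _
  have hF : ∀ i, ContDiffOn ℝ 1 (f i ∘ shear k) D := fun i =>
    ((hfan i).contDiffOn_of_completeSpace).comp
      (contDiffOn_shear hkc fun q hq => ⟨hq.1, hq.2.1⟩) fun q hq => (hDU q hq).1
  obtain ⟨hΦc, e₁, e₂, CΦ, hCΦ, hΦb⟩ := prod_abs_rpow_monomial_bounds γ hDopen hDpos hF hη'
    fun i => by
      obtain ⟨d, α, β, hd, hα, hm⟩ := hmono i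
      exact ⟨d, α, β, hd, hα, fun q hq => hm q (hDa hq)⟩
  have hΦi : IntegrableOn Φ D := by
    have h1 : IntegrableOn (stdFun n f γ E) (shear k' '' D) := by
      refine hint.mono_set ?_
      rintro _ ⟨q, hq, rfl⟩
      rw [hshear q hq]
      exact (hDU q hq).2
    exact (integrableOn_congr_fun hstd hDopen.measurableSet).1 ((hmp.integrableOn_image hme).1 h1)
  obtain ⟨C, hC, hmain⟩ := enorm_setIntegral_sliver_phase_le hκ hCG hC₁ hc₂ hb.le hCΦ
    (hgc.mono hI₁) (hGc.mono hI₁) (hgm.mono hI₁) (hGm.mono hI₁) (fun x hx => hcurve x (hI₁ hx))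
    (fun x hx hxr => hdouble x hx (hxr.trans_le hrr₁)) (fun x hx => hld x (hI₂ hx))
    (fun X hX hXr => hlam X hX (hXr.trans_le hrr₂))
    (fun q hq => by
      have h2 : |(shear k q).2| < b * |(shear k q).1| := hS ⟨q, hDa hq, rfl⟩
      rw [show |(shear k q).1| = q.1 from abs_of_pos hq.1] at h2
      exact h2.le) hΦc hΦb hΦi A
  refine ⟨C, hC, fun α hαb hα t u => ?_⟩
  obtain ⟨hmi, hmb⟩ := hmain α hαb t u (r / 2) (by positivity) hr2
  have hphase : EqOn
      (fun q => oscIntegrand (fun p => α p * stdFun n f γ E p) t u (shear k' q))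
      (phaseIntegrand (fun q => α (shear k q) * Φ q)
        (fun x => (t + c * u) * x + u * (k x - c * x)) u) D' := fun q hq => by
    have hq' := hD'D hq
    have h1 := hstd q hq'
    simp only
    rw [hshear q hq'] at h1 ⊢
    rw [oscIntegrand_shear _ k c]
    simp only [phaseIntegrand, h1]
  rw [(hintegral α hα t u).1, (hintegral α hα t u).2, setIntegral_congr_fun hD'm hphase]
  refine ⟨(integrableOn_congr_fun hphase hD'm).2 hmi, ?_⟩
  rw [ofReal_norm]
  refine hmb.trans (mul_le_mul_right ?_ _)
  refine le_trans (le_of_eq ?_) (lintegral_mono_set (hSV ▸ inter_subset_left))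
  rw [← hmp.setLIntegral_comp_emb hme]
  refine setLIntegral_congr_fun hD'm fun q hq => ?_
  rw [hstd q (hD'D hq), hshear q (hD'D hq)]
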